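/- Let n ≥ 1 and s ∈ (0,1), with s ≤ 1/2 if n = 1, and let M ≥ 2. Let u : ℝⁿ → 𝕊^{M−1} ⊂ ℝ^M be measurable with [u]_{W^{s,n/s}(ℝⁿ)} < ∞, let Ω ⊆ ℝⁿ be open, and assume u is a minimizing W^{s,n/s}-harmonic map in Ω without homotopy constraint, i.e. ∫_{ℝⁿ}∫_{ℝⁿ} |u(x)−u(y)|^{n/s}/|x−y|^{2n} dx dy ≤ ∫_{ℝⁿ}∫_{ℝⁿ} |v(x)−v(y)|^{n/s}/|x−y|^{2n} dx dy for every measurable v : ℝⁿ → 𝕊^{M−1} with v = u almost everywhere on ℝⁿ∖Ω. Then u has a representative which is locally Hölder continuous in Ω: there exist α ∈ (0,1) and a map ũ : ℝⁿ → 𝕊^{M−1} with ũ = u almost everywhere such that ũ is α-Hölder continuous on every compact subset of Ω. -/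

import Mathlib

open MeasureTheory
open scoped ENNReal

noncomputable section

/-- Euclidean space `ℝᵏ`. -/
abbrev Euc (k : ℕ) : Type _ := EuclideanSpace ℝ (Fin k)

/-- The Gagliardo seminorm `[f]_{W^{σ,p}(A)}` as a value in `[0,∞]`. -/
def gagliardo (n M : ℕ) (σ p : ℝ) (A : Set (Euc n)) (f : Euc n → Euc M) : ℝ≥0∞ :=
  (∫⁻ x in A, ∫⁻ y in A,
      ENNReal.ofReal (‖f x - f y‖ ^ p / ‖x - y‖ ^ ((n : ℝ) + σ * p))) ^ (1 / p)

/-- The (unrooted) `E_{s,n/s}` energy `∫∫_{ℝⁿ×ℝⁿ} |f(x)-f(y)|^{n/s}/|x-y|^{2n} dx dy`. -/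
def energy (n M : ℕ) (s : ℝ) (f : Euc n → Euc M) : ℝ≥0∞ :=
  ∫⁻ x, ∫⁻ y, ENNReal.ofReal (‖f x - f y‖ ^ ((n : ℝ) / s) / ‖x - y‖ ^ (2 * (n : ℝ)))

open Metric Set Filter Topology

lemma volume_preimage_le_of_anti {n : ℕ} {T : Euc n → Euc n} (hT : AntilipschitzWith 2 T)
    (s : Set (Euc n)) : volume (T ⁻¹' s) ≤ 2 ^ n * volume s := by
  have hH : (μH[(Module.finrank ℝ (Euc n) : ℝ)] : Measure (Euc n)).IsAddHaarMeasure :=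
    isAddHaarMeasure_hausdorffMeasure
  have hfr : Module.finrank ℝ (Euc n) = n := by simp
  rw [hfr] at hH
  have key := Measure.isAddLeftInvariant_eq_smul (volume : Measure (Euc n)) (μH[(n : ℝ)])
  rw [key, Measure.smul_apply, Measure.smul_apply, ENNReal.smul_def, ENNReal.smul_def, smul_eq_mul,
    smul_eq_mul]
  have h := hT.hausdorffMeasure_preimage_le (d := (n : ℝ)) (by positivity) s
  rw [ENNReal.rpow_natCast] at h
  calc _ ≤ _ := mul_le_mul_right h _
    _ = _ := by push_cast; ring

lemma lintegral_comp_anti {n : ℕ} {T : Euc n → Euc n} (hT : AntilipschitzWith 2 T)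
    (hTm : Measurable T) {f : Euc n → ℝ≥0∞} (hf : Measurable f) :
    ∫⁻ x, f (T x) ≤ 2 ^ n * ∫⁻ x, f x := by
  rw [← lintegral_map hf hTm]
  have : Measure.map T volume ≤ (2 ^ n : ℝ≥0∞) • (volume : Measure (Euc n)) := by
    refine Measure.le_iff.2 fun s hs => ?_
    rw [Measure.map_apply hTm hs]
    simpa using volume_preimage_le_of_anti hT s
  calc _ ≤ ∫⁻ x, f x ∂((2 ^ n : ℝ≥0∞) • (volume : Measure (Euc n))) := lintegral_mono' this le_rfl
    _ = _ := by rw [lintegral_smul_measure, smul_eq_mul]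

lemma lintegral_prod_comp_anti {n : ℕ} {T : Euc n → Euc n} (hT : AntilipschitzWith 2 T)
    (hTm : Measurable T) {f : Euc n × Euc n → ℝ≥0∞} (hf : Measurable f) :
    ∫⁻ q : Euc n × Euc n, f (T q.1, T q.2) ≤ 2 ^ n * (2 ^ n * ∫⁻ q : Euc n × Euc n, f q) := by
  rw [Measure.volume_eq_prod, lintegral_prod _ (by fun_prop), lintegral_prod _ (by fun_prop)]
  calc _ ≤ ∫⁻ x, 2 ^ n * ∫⁻ y, f (T x, y) := by
        refine lintegral_mono fun x => ?_
        exact lintegral_comp_anti hT hTm (f := fun y => f (T x, y)) (by fun_prop)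
    _ = 2 ^ n * ∫⁻ x, ∫⁻ y, f (T x, y) := lintegral_const_mul _
        ((hf.comp (by fun_prop : Measurable fun q : Euc n × Euc n => (T q.1, q.2))).lintegral_prod_right')
    _ ≤ _ := by
        gcongr
        exact lintegral_comp_anti hT hTm (f := fun x => ∫⁻ y, f (x, y)) hf.lintegral_prod_right'

/-- normalised measure on the closed unit ball -/
def lam (n : ℕ) : Measure (Euc n) :=
  (volume (closedBall (0 : Euc n) 1))⁻¹ • volume.restrict (closedBall (0 : Euc n) 1)

/-- volume of the unit ball -/
def om (n : ℕ) : ℝ≥0∞ := volume (closedBall (0 : Euc n) 1)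

lemma om_ne_zero (n : ℕ) : om n ≠ 0 := (measure_closedBall_pos _ _ one_pos).ne'
lemma om_ne_top (n : ℕ) : om n ≠ ⊤ := measure_closedBall_lt_top.ne

instance lam_prob (n : ℕ) : IsProbabilityMeasure (lam n) := by
  constructor
  simp only [lam, Measure.smul_apply, Measure.restrict_apply_univ, smul_eq_mul]
  exact ENNReal.inv_mul_cancel (om_ne_zero n) (om_ne_top n)

lemma lam_ae (n : ℕ) : ∀ᵐ z ∂(lam n), ‖z‖ ≤ 1 := by
  refine Measure.ae_smul_measure ?_ _
  filter_upwards [ae_restrict_mem (measurableSet_closedBall)] with z hz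
  simpa using hz

lemma vol_closedBall {n : ℕ} (x : Euc n) {r : ℝ} (hr : 0 < r) :
    volume (closedBall x r) = ENNReal.ofReal r ^ n * om n := by
  rw [Measure.addHaar_closedBall' _ _ hr.le, om, ENNReal.ofReal_pow hr.le]; simp

lemma lintegral_lam {n : ℕ} (x : Euc n) {r : ℝ} (hr : 0 < r) {f : Euc n → ℝ≥0∞}
    (hf : Measurable f) :
    ∫⁻ z, f (x + r • z) ∂(lam n) = (ENNReal.ofReal r ^ n * om n)⁻¹ * ∫⁻ y in closedBall x r, f y := by
  have hr0 : ENNReal.ofReal r ≠ 0 := by simpa using hr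
  have hpre : (fun z : Euc n => x + r • z) ⁻¹' closedBall x r = closedBall 0 1 := by
    ext z
    simp only [mem_preimage, mem_closedBall, dist_eq_norm, add_sub_cancel_left, sub_zero, norm_smul,
      Real.norm_eq_abs, abs_of_pos hr]
    constructor
    · intro h; nlinarith
    · intro h; nlinarith
  have hm : Measurable fun z : Euc n => x + r • z := by fun_prop
  have hmap : Measure.map (fun z : Euc n => x + r • z) volume
      = (ENNReal.ofReal r ^ n)⁻¹ • (volume : Measure (Euc n)) := by
    have : (fun z : Euc n => x + r • z) = (fun z => x + z) ∘ (fun z => r • z) := rfl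
    rw [this, ← Measure.map_map (by fun_prop) (by fun_prop), Measure.map_addHaar_smul _ hr.ne',
      Measure.map_smul, map_add_left_eq_self]
    congr 1
    rw [abs_of_pos (by positivity), ENNReal.ofReal_inv_of_pos (by positivity),
      ENNReal.ofReal_pow hr.le]
    simp
  rw [lam, lintegral_smul_measure, smul_eq_mul, ← om, ← hpre, ← setLIntegral_map measurableSet_closedBall hf hm, hmap,
    Measure.restrict_smul, lintegral_smul_measure, smul_eq_mul, ← mul_assoc,
    ENNReal.mul_inv (by simp [hr0]) (by simp)]
  rw [mul_comm (om n)⁻¹]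

lemma jensen_lam {n M : ℕ} {p : ℝ} (hp : 1 ≤ p) (h : Euc n → Euc M)
    (hm : AEStronglyMeasurable h (lam n)) :
    ‖∫ z, h z ∂(lam n)‖ₑ ^ p ≤ ∫⁻ z, ‖h z‖ₑ ^ p ∂(lam n) := by
  have hp0 : 0 < p := by linarith
  have h1 : ‖∫ z, h z ∂(lam n)‖ₑ ≤ eLpNorm h 1 (lam n) := by
    rw [eLpNorm_one_eq_lintegral_enorm]; exact enorm_integral_le_lintegral_enorm _
  have h2 := eLpNorm_le_eLpNorm_of_exponent_le (μ := lam n) (p := 1) (q := ENNReal.ofReal p)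
    (by simpa using ENNReal.ofReal_le_ofReal hp) hm
  rw [eLpNorm_eq_lintegral_rpow_enorm_toReal (p := ENNReal.ofReal p) (by simpa using hp0) (by simp),
    ENNReal.toReal_ofReal hp0.le] at h2
  calc _ ≤ ((∫⁻ z, ‖h z‖ₑ ^ p ∂(lam n)) ^ (1 / p)) ^ p := by gcongr; exact h1.trans h2
    _ = _ := by rw [← ENNReal.rpow_mul, one_div_mul_cancel hp0.ne', ENNReal.rpow_one]

/-- energy density -/
def ed {n M : ℕ} (p : ℝ) (u : Euc n → Euc M) (q : Euc n × Euc n) : ℝ≥0∞ :=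
  ‖u q.1 - u q.2‖ₑ ^ p * (‖q.1 - q.2‖ₑ ^ (2 * n))⁻¹

lemma ed_meas {n M : ℕ} {p : ℝ} {u : Euc n → Euc M} (hu : Measurable u) : Measurable (ed p u) := by
  unfold ed; fun_prop

lemma ofReal_div_eq {n k : ℕ} {p : ℝ} (hp : 0 < p) (a : Euc k) (x y : Euc n)
    (h : x = y → a = 0) :
    ENNReal.ofReal (‖a‖ ^ p / ‖x - y‖ ^ (2 * (n : ℝ))) = ‖a‖ₑ ^ p * (‖x - y‖ₑ ^ (2 * n))⁻¹ := by
  by_cases hxy : x = y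
  · simp [h hxy, Real.zero_rpow hp.ne', ENNReal.zero_rpow_of_pos hp]
  · have h1 : 0 < ‖x - y‖ := norm_pos_iff.2 (sub_ne_zero.2 hxy)
    rw [div_eq_mul_inv, ENNReal.ofReal_mul (by positivity), ENNReal.ofReal_inv_of_pos (by positivity),
      ← ENNReal.ofReal_rpow_of_nonneg (by positivity) hp.le, ofReal_norm]
    have : ‖x - y‖ ^ (2 * (n : ℝ)) = ‖x - y‖ ^ (2 * n) := by
      rw [← Real.rpow_natCast]; push_cast; rfl
    rw [this, ENNReal.ofReal_pow (norm_nonneg _), ofReal_norm]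

lemma energy_eq {n M : ℕ} (hn : 1 ≤ n) {s : ℝ} (hs : 0 < s) {u : Euc n → Euc M} (hu : Measurable u) :
    energy n M s u = ∫⁻ q : Euc n × Euc n, ed ((n : ℝ) / s) u q := by
  have hp : 0 < (n : ℝ) / s := by positivity
  rw [Measure.volume_eq_prod, lintegral_prod _ (ed_meas hu).aemeasurable, energy]
  refine lintegral_congr fun x => lintegral_congr fun y => ?_
  rw [ofReal_div_eq hp _ _ _ (by rintro rfl; simp), ed]

lemma gagliardo_fin {n M : ℕ} (hn : 1 ≤ n) {s : ℝ} (hs : 0 < s) {u : Euc n → Euc M} (hu : Measurable u)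
    (h : gagliardo n M s ((n : ℝ) / s) Set.univ u < ⊤) :
    ∫⁻ q : Euc n × Euc n, ed ((n : ℝ) / s) u q ≠ ⊤ := by
  have hp : 0 < (n : ℝ) / s := by positivity
  rw [← energy_eq hn hs hu]
  have e1 : (n : ℝ) + s * ((n : ℝ) / s) = 2 * n := by field_simp; ring
  rw [gagliardo, e1, ENNReal.rpow_lt_top_iff_of_pos (by positivity)] at h
  simpa [energy] using h.ne

/-- averaging radius -/
def dl {n : ℕ} (x0 : Euc n) (R : ℝ) (x : Euc n) : ℝ := max (R - ‖x - x0‖) 0 / 4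

/-- cutoff -/
def gg {n : ℕ} (x0 : Euc n) (R : ℝ) (x : Euc n) : ℝ := max 0 (min 1 (4 / R * (‖x - x0‖ - R / 2)))

/-- the bi-Lipschitz deformation -/
def TT {n : ℕ} (x0 : Euc n) (R : ℝ) (z x : Euc n) : Euc n := x + dl x0 R x • z

lemma dl_nonneg {n : ℕ} (x0 : Euc n) (R : ℝ) (x : Euc n) : 0 ≤ dl x0 R x := by unfold dl; positivity

lemma dl_cont {n : ℕ} (x0 : Euc n) (R : ℝ) : Continuous (dl x0 R) := by unfold dl; fun_prop

lemma gg_cont {n : ℕ} (x0 : Euc n) (R : ℝ) : Continuous (gg x0 R) := by unfold gg; fun_prop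

lemma TT_cont {n : ℕ} (x0 : Euc n) (R : ℝ) : Continuous (fun q : Euc n × Euc n => TT x0 R q.1 q.2) := by
  unfold TT; have := dl_cont x0 R; fun_prop

lemma abs_norm_sub_le' {n : ℕ} (x0 x y : Euc n) : |‖x - x0‖ - ‖y - x0‖| ≤ ‖x - y‖ := by
  have := abs_norm_sub_norm_le (x - x0) (y - x0)
  simpa using this

lemma dl_lip {n : ℕ} (x0 : Euc n) (R : ℝ) (x y : Euc n) : |dl x0 R x - dl x0 R y| ≤ ‖x - y‖ / 4 := by
  have h := abs_norm_sub_le' x0 x y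
  have h2 := abs_max_sub_max_le_abs (R - ‖x - x0‖) (R - ‖y - x0‖) 0
  have : dl x0 R x - dl x0 R y = (max (R - ‖x - x0‖) 0 - max (R - ‖y - x0‖) 0) / 4 := by
    unfold dl; ring
  rw [this, abs_div, abs_of_pos (by norm_num : (0 : ℝ) < 4)]
  have h3 : |R - ‖x - x0‖ - (R - ‖y - x0‖)| = |‖x - x0‖ - ‖y - x0‖| := by
    rw [← abs_neg]; congr 1; ring
  rw [h3] at h2
  linarith

lemma gg_lip {n : ℕ} (x0 : Euc n) {R : ℝ} (hR : 0 < R) (x y : Euc n) :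
    |gg x0 R x - gg x0 R y| ≤ 4 / R * ‖x - y‖ := by
  have h := abs_norm_sub_le' x0 x y
  unfold gg
  calc _ ≤ |min 1 (4 / R * (‖x - x0‖ - R / 2)) - min 1 (4 / R * (‖y - x0‖ - R / 2))| := by
        rw [max_comm, max_comm 0]; exact abs_max_sub_max_le_abs _ _ _
    _ ≤ |4 / R * (‖x - x0‖ - R / 2) - 4 / R * (‖y - x0‖ - R / 2)| := by
        have := abs_min_sub_min_le_max 1 (4 / R * (‖x - x0‖ - R / 2)) 1 (4 / R * (‖y - x0‖ - R / 2))
        simpa using this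
    _ = 4 / R * |‖x - x0‖ - ‖y - x0‖| := by
        rw [← mul_sub, abs_mul, abs_of_pos (by positivity)]; congr 2; ring
    _ ≤ _ := by gcongr

lemma gg_nonneg {n : ℕ} (x0 : Euc n) (R : ℝ) (x : Euc n) : 0 ≤ gg x0 R x := le_max_left _ _
lemma gg_le_one {n : ℕ} (x0 : Euc n) (R : ℝ) (x : Euc n) : gg x0 R x ≤ 1 :=
  max_le zero_le_one (min_le_left _ _)
lemma gg_zero {n : ℕ} (x0 : Euc n) {R : ℝ} (hR : 0 < R) {x : Euc n} (h : ‖x - x0‖ < R / 2) :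
    gg x0 R x = 0 := by
  unfold gg
  apply max_eq_left
  refine (min_le_right _ _).trans ?_
  exact mul_nonpos_of_nonneg_of_nonpos (by positivity) (by linarith)
lemma gg_one {n : ℕ} (x0 : Euc n) {R : ℝ} (hR : 0 < R) {x : Euc n} (h : 3 / 4 * R ≤ ‖x - x0‖) :
    gg x0 R x = 1 := by
  unfold gg
  have : 1 ≤ 4 / R * (‖x - x0‖ - R / 2) := by
    rw [div_mul_eq_mul_div, le_div_iff₀ hR]; linarith
  rw [min_eq_left this]; simp

lemma TT_out {n : ℕ} (x0 : Euc n) {R : ℝ} (z : Euc n) {x : Euc n} (h : R ≤ ‖x - x0‖) :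
    TT x0 R z x = x := by
  have : dl x0 R x = 0 := by unfold dl; rw [max_eq_right (by linarith)]; simp
  simp [TT, this]

lemma dl_in {n : ℕ} (x0 : Euc n) {R : ℝ} {x : Euc n} (h : ‖x - x0‖ ≤ R) :
    dl x0 R x = (R - ‖x - x0‖) / 4 := by
  unfold dl; rw [max_eq_left (by linarith)]

lemma TT_sub_le {n : ℕ} (x0 : Euc n) {R : ℝ} {z : Euc n} (hz : ‖z‖ ≤ 1) (x : Euc n) :
    ‖TT x0 R z x - x‖ ≤ dl x0 R x := by
  simp only [TT, add_sub_cancel_left, norm_smul, Real.norm_eq_abs, abs_of_nonneg (dl_nonneg x0 R x)]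
  have := dl_nonneg x0 R x
  nlinarith

lemma tri {n : ℕ} (a b c : Euc n) : ‖a - c‖ ≤ ‖a - b‖ + ‖b - c‖ := by
  have := norm_add_le (a - b) (b - c); simpa using this

lemma TT_in {n : ℕ} (x0 : Euc n) {R : ℝ} {z : Euc n} (hz : ‖z‖ ≤ 1) {x : Euc n} (h : ‖x - x0‖ < R) :
    ‖TT x0 R z x - x0‖ < R := by
  have h1 := TT_sub_le x0 (R := R) hz x
  rw [dl_in x0 h.le] at h1
  have := tri (TT x0 R z x) x x0
  linarith

lemma TT_far {n : ℕ} (x0 : Euc n) {R : ℝ} {z : Euc n} (hz : ‖z‖ ≤ 1) {x : Euc n} (hR : 0 < R)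
    (h : R / 2 ≤ ‖x - x0‖) : R / 4 ≤ ‖TT x0 R z x - x0‖ := by
  rcases le_or_gt R ‖x - x0‖ with h' | h'
  · rw [TT_out x0 z h']; linarith
  · have h1 := TT_sub_le x0 (R := R) hz x
    rw [dl_in x0 h'.le] at h1
    have := tri x (TT x0 R z x) x0
    rw [norm_sub_rev x (TT x0 R z x)] at this
    linarith

lemma TT_wt {n : ℕ} (x0 : Euc n) {R : ℝ} {z : Euc n} (hz : ‖z‖ ≤ 1) (x : Euc n) (hR : 0 < R) :
    R + ‖TT x0 R z x - x0‖ ≤ 2 * (R + ‖x - x0‖) := by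
  rcases le_or_gt R ‖x - x0‖ with h' | h'
  · rw [TT_out x0 z h']; linarith
  · have := TT_in x0 hz h'
    have := norm_nonneg (x - x0)
    linarith

lemma TT_diff {n : ℕ} (x0 : Euc n) {R : ℝ} {z : Euc n} (hz : ‖z‖ ≤ 1) (x y : Euc n) :
    ‖(TT x0 R z x - TT x0 R z y) - (x - y)‖ ≤ ‖x - y‖ / 4 := by
  have : (TT x0 R z x - TT x0 R z y) - (x - y) = (dl x0 R x - dl x0 R y) • z := by
    unfold TT; module
  rw [this, norm_smul, Real.norm_eq_abs]
  have := dl_lip x0 R x y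
  have := abs_nonneg (dl x0 R x - dl x0 R y)
  nlinarith [norm_nonneg z]

lemma TT_lip {n : ℕ} (x0 : Euc n) {R : ℝ} {z : Euc n} (hz : ‖z‖ ≤ 1) (x y : Euc n) :
    ‖TT x0 R z x - TT x0 R z y‖ₑ ≤ 2 * ‖x - y‖ₑ := by
  have h := TT_diff x0 (R := R) hz x y
  have h2 := norm_sub_norm_le (TT x0 R z x - TT x0 R z y) (x - y)
  have h3 : ‖TT x0 R z x - TT x0 R z y‖ ≤ 2 * ‖x - y‖ := by linarith [norm_nonneg (x - y)]
  have h4 := ENNReal.ofReal_le_ofReal h3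
  rwa [ENNReal.ofReal_mul (by norm_num), ENNReal.ofReal_ofNat, ofReal_norm, ofReal_norm] at h4

lemma TT_anti {n : ℕ} (x0 : Euc n) {R : ℝ} {z : Euc n} (hz : ‖z‖ ≤ 1) :
    AntilipschitzWith 2 (TT x0 R z) := by
  refine AntilipschitzWith.of_le_mul_dist fun x y => ?_
  rw [dist_eq_norm, dist_eq_norm]
  have h := TT_diff x0 (R := R) hz x y
  have h2 := norm_sub_norm_le (x - y) (TT x0 R z x - TT x0 R z y)
  rw [norm_sub_rev] at h
  push_cast
  linarith [norm_nonneg (x - y)]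

/-- kernel integral -/
def KK (n : ℕ) (p : ℝ) : ℝ≥0∞ := ∫⁻ h : Euc n, (min ‖h‖ₑ 1) ^ p * (‖h‖ₑ ^ (2 * n))⁻¹

lemma KK_fin {n : ℕ} (hn : 1 ≤ n) {p : ℝ} (hp : (n : ℝ) < p) : KK n p ≠ ⊤ := by
  have : Nonempty (Fin n) := ⟨⟨0, hn⟩⟩
  have hp0 : 0 < p := lt_of_le_of_lt (by positivity) hp
  set f : ℝ → ℝ := fun r => (min r 1) ^ p * (r ^ (2 * n))⁻¹ with hf
  have hintg : Integrable (fun x : Euc n => f ‖x‖) volume := by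
    rw [integrable_fun_norm_addHaar]
    have hfr : Module.finrank ℝ (Euc n) = n := by simp
    rw [hfr, ← Ioc_union_Ioi_eq_Ioi zero_le_one, integrableOn_union]
    constructor
    · have h1 : IntegrableOn (fun r : ℝ => r ^ (p - n - 1)) (Ioc 0 1) := by
        have := intervalIntegral.intervalIntegrable_rpow' (a := 0) (b := 1) (r := p - n - 1) (by linarith)
        rwa [intervalIntegrable_iff_integrableOn_Ioc_of_le zero_le_one] at this
      refine h1.congr_fun (fun r hr => ?_) measurableSet_Ioc
      have hr0 : 0 < r := hr.1
      simp only [hf, smul_eq_mul, min_eq_left hr.2]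
      rw [Real.rpow_sub hr0, Real.rpow_sub hr0, Real.rpow_one, Real.rpow_natCast]
      obtain ⟨k, rfl⟩ : ∃ k, n = k + 1 := ⟨n - 1, by omega⟩
      simp only [Nat.add_sub_cancel]
      field_simp
      ring
    · have h1 : IntegrableOn (fun r : ℝ => r ^ (-(n : ℝ) - 1)) (Ioi 1) :=
        integrableOn_Ioi_rpow_of_lt (by
          have : (1 : ℝ) ≤ n := by exact_mod_cast hn
          linarith) one_pos
      refine h1.congr_fun (fun r hr => ?_) measurableSet_Ioi
      have hr1 : 1 < r := hr
      have hr0 : 0 < r := by linarith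
      simp only [hf, smul_eq_mul, min_eq_right hr1.le]
      rw [Real.rpow_sub hr0, Real.rpow_neg hr0.le, Real.rpow_one, Real.rpow_natCast, Real.one_rpow]
      obtain ⟨k, rfl⟩ : ∃ k, n = k + 1 := ⟨n - 1, by omega⟩
      simp only [Nat.add_sub_cancel]
      field_simp
      ring
  have := hintg.lintegral_lt_top
  refine ne_of_lt (lt_of_le_of_lt (le_of_eq ?_) this)
  unfold KK
  refine lintegral_congr fun h => ?_
  by_cases h0 : h = 0
  · simp [h0, hf, ENNReal.zero_rpow_of_pos hp0, Real.zero_rpow hp0.ne']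
  · have h1 : 0 < ‖h‖ := norm_pos_iff.2 h0
    simp only [hf]
    rw [ENNReal.ofReal_mul (by positivity), ENNReal.ofReal_inv_of_pos (by positivity),
      ← ENNReal.ofReal_rpow_of_nonneg (by positivity) hp0.le, ENNReal.ofReal_min, ofReal_norm,
      ENNReal.ofReal_pow (norm_nonneg _), ofReal_norm, ENNReal.ofReal_one]

/-- weight -/
def wt {n : ℕ} (x0 : Euc n) (R : ℝ) (y : Euc n) : ℝ≥0∞ :=
  ENNReal.ofReal R ^ n * (ENNReal.ofReal (R + ‖y - x0‖) ^ (2 * n))⁻¹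

lemma wt_meas {n : ℕ} (x0 : Euc n) (R : ℝ) : Measurable (wt x0 R) := by unfold wt; fun_prop

lemma inv_pow_le {a b c : ℝ≥0∞} (hc : c ≠ 0) (hc' : c ≠ ⊤) (h : a ≤ c * b) (k : ℕ) :
    (b ^ k)⁻¹ ≤ c ^ k * (a ^ k)⁻¹ := by
  have h1 : a ^ k ≤ c ^ k * b ^ k := by rw [← mul_pow]; gcongr
  have h2 : (c ^ k * b ^ k)⁻¹ ≤ (a ^ k)⁻¹ := by gcongr
  rw [ENNReal.mul_inv (by simp [hc]) (by simp [hc'])] at h2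
  calc (b ^ k)⁻¹ = c ^ k * ((c ^ k)⁻¹ * (b ^ k)⁻¹) := by
        rw [← mul_assoc, ENNReal.mul_inv_cancel (by simp [hc]) (by simp [hc']), one_mul]
    _ ≤ _ := by gcongr

lemma lintegral_scale {n : ℕ} (y : Euc n) {R : ℝ} (hR : 0 < R) {f : Euc n → ℝ≥0∞} (hf : Measurable f) :
    ∫⁻ x, f (R⁻¹ • (x - y)) = ENNReal.ofReal R ^ n * ∫⁻ x, f x := by
  rw [lintegral_sub_right_eq_self (fun x => f (R⁻¹ • x)) y,
    ← lintegral_map (f := f) (g := fun x : Euc n => R⁻¹ • x) hf (by fun_prop),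
    Measure.map_addHaar_smul _ (by positivity), lintegral_smul_measure, smul_eq_mul]
  congr 1
  rw [abs_of_pos (by positivity), ← ENNReal.ofReal_pow hR.le]
  simp

lemma G_bound {n : ℕ} (hn : 1 ≤ n) {p : ℝ} (hp : (n : ℝ) < p) :
    ∃ C : ℝ≥0∞, C ≠ ⊤ ∧ ∀ (x0 : Euc n) (R : ℝ), 0 < R → ∀ y,
      ∫⁻ x, ‖gg x0 R x - gg x0 R y‖ₑ ^ p * (‖x - y‖ₑ ^ (2 * n))⁻¹ ≤ C * wt x0 R y := by
  have hp0 : 0 < p := lt_of_le_of_lt (by positivity) hp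
  refine ⟨4 ^ p * KK n p * 3 ^ (2 * n) + 3 ^ (2 * n) * om n, ?_, ?_⟩
  · have := KK_fin hn hp
    have := om_ne_top n
    finiteness
  intro x0 R hR y
  have hR0 : ENNReal.ofReal R ≠ 0 := by simpa using hR
  rw [add_mul]
  rcases lt_or_ge ‖y - x0‖ (2 * R) with hy | hy
  · refine le_add_right ?_
    have hpt : ∀ x, ‖gg x0 R x - gg x0 R y‖ₑ ^ p * (‖x - y‖ₑ ^ (2 * n))⁻¹ ≤
        (4 ^ p * (ENNReal.ofReal R ^ (2 * n))⁻¹) * (fun h : Euc n => (min ‖h‖ₑ 1) ^ p * (‖h‖ₑ ^ (2 * n))⁻¹) (R⁻¹ • (x - y)) := by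
      intro x
      have e1 : ‖R⁻¹ • (x - y)‖ₑ = (ENNReal.ofReal R)⁻¹ * ‖x - y‖ₑ := by
        rw [enorm_smul, ← ofReal_norm (R⁻¹), Real.norm_eq_abs, abs_of_pos (by positivity),
          ENNReal.ofReal_inv_of_pos hR]
      have e2 : ‖gg x0 R x - gg x0 R y‖ₑ ≤ 4 * min ‖R⁻¹ • (x - y)‖ₑ 1 := by
        have a1 := gg_lip x0 hR x y
        have a2 : |gg x0 R x - gg x0 R y| ≤ 4 := by
          rw [abs_le]
          constructor <;> linarith [gg_nonneg x0 R x, gg_nonneg x0 R y, gg_le_one x0 R x, gg_le_one x0 R y]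
        have a3 : |gg x0 R x - gg x0 R y| ≤ 4 * min ‖R⁻¹ • (x - y)‖ 1 := by
          rw [mul_min_of_nonneg _ _ (by norm_num)]
          refine le_min ?_ (by linarith)
          rw [norm_smul, Real.norm_eq_abs, abs_of_pos (by positivity : 0 < R⁻¹)]
          rw [div_eq_mul_inv, mul_assoc] at a1; exact a1
        have a4 := ENNReal.ofReal_le_ofReal a3
        rwa [ENNReal.ofReal_mul (by norm_num), ENNReal.ofReal_min, ENNReal.ofReal_ofNat, ofReal_norm,
          ENNReal.ofReal_one, ← Real.norm_eq_abs, ofReal_norm] at a4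
      have e3 : (‖x - y‖ₑ ^ (2 * n))⁻¹ = (ENNReal.ofReal R ^ (2 * n))⁻¹ * (‖R⁻¹ • (x - y)‖ₑ ^ (2 * n))⁻¹ := by
        rw [← ENNReal.mul_inv (by simp [hR0]) (by simp), ← mul_pow, e1, ← mul_assoc,
          ENNReal.mul_inv_cancel hR0 (by simp), one_mul]
      simp only []
      calc _ ≤ (4 * min ‖R⁻¹ • (x - y)‖ₑ 1) ^ p * ((ENNReal.ofReal R ^ (2 * n))⁻¹ * (‖R⁻¹ • (x - y)‖ₑ ^ (2 * n))⁻¹) := by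
            rw [← e3]; gcongr
        _ = _ := by rw [ENNReal.mul_rpow_of_nonneg _ _ hp0.le]; ring
    calc _ ≤ _ := lintegral_mono hpt
      _ = (4 ^ p * (ENNReal.ofReal R ^ (2 * n))⁻¹) * (ENNReal.ofReal R ^ n * KK n p) := by
          rw [lintegral_const_mul _ (by fun_prop), lintegral_scale (f := fun h : Euc n => (min ‖h‖ₑ 1) ^ p * (‖h‖ₑ ^ (2 * n))⁻¹) y hR (by fun_prop), KK]
      _ ≤ (4 ^ p * (3 ^ (2 * n) * (ENNReal.ofReal (R + ‖y - x0‖) ^ (2 * n))⁻¹)) * (ENNReal.ofReal R ^ n * KK n p) := by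
          gcongr
          refine inv_pow_le (by norm_num) (by norm_num) ?_ _
          rw [← ENNReal.ofReal_ofNat 3, ← ENNReal.ofReal_mul (by norm_num)]
          exact ENNReal.ofReal_le_ofReal (by linarith)
      _ = _ := by rw [wt]; ring
  · refine le_add_left ?_
    have hpt : ∀ x, ‖gg x0 R x - gg x0 R y‖ₑ ^ p * (‖x - y‖ₑ ^ (2 * n))⁻¹ ≤
        (closedBall x0 R).indicator (fun _ => 3 ^ (2 * n) * (ENNReal.ofReal (R + ‖y - x0‖) ^ (2 * n))⁻¹) x := by
      intro x
      by_cases hx : x ∈ closedBall x0 R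
      · rw [indicator_of_mem hx]
        rw [mem_closedBall, dist_eq_norm] at hx
        have a2 : |gg x0 R x - gg x0 R y| ≤ 1 := by
          rw [abs_le]
          constructor <;> linarith [gg_nonneg x0 R x, gg_nonneg x0 R y, gg_le_one x0 R x, gg_le_one x0 R y]
        have a3 : ‖gg x0 R x - gg x0 R y‖ₑ ≤ 1 := by
          rw [← ofReal_norm, Real.norm_eq_abs]; simpa using a2
        have a4 : ‖gg x0 R x - gg x0 R y‖ₑ ^ p ≤ 1 := ENNReal.rpow_le_one a3 hp0.le
        calc _ ≤ 1 * (‖x - y‖ₑ ^ (2 * n))⁻¹ := by gcongr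
          _ ≤ _ := by
            rw [one_mul]
            refine inv_pow_le (by norm_num) (by norm_num) ?_ _
            have b1 := tri y x x0
            have b2 : R + ‖y - x0‖ ≤ 3 * ‖x - y‖ := by rw [norm_sub_rev y x] at b1; linarith
            have b3 := ENNReal.ofReal_le_ofReal b2
            rwa [ENNReal.ofReal_mul (by norm_num), ENNReal.ofReal_ofNat, ofReal_norm] at b3
      · rw [indicator_of_notMem hx]
        rw [mem_closedBall, dist_eq_norm, not_le] at hx
        rw [gg_one x0 hR (by linarith), gg_one x0 hR (by linarith)]
        simp [ENNReal.zero_rpow_of_pos hp0]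
    calc _ ≤ _ := lintegral_mono hpt
      _ = _ := by
        rw [lintegral_indicator measurableSet_closedBall, setLIntegral_const, vol_closedBall _ hR, wt]; ring

/-- ball average -/
def VV {n M : ℕ} (u : Euc n → Euc M) (x : Euc n) (r : ℝ) : Euc M := ∫ z, u (x + r • z) ∂(lam n)

lemma int_of_bdd {n M : ℕ} {f : Euc n → Euc M} (hf : Measurable f) {C : ℝ} (hb : ∀ x, ‖f x‖ ≤ C) :
    Integrable f (lam n) :=
  Integrable.of_bound hf.aestronglyMeasurable C (Eventually.of_forall hb)

lemma avg_pt {n M : ℕ} {p : ℝ} (hp : 1 ≤ p) {u : Euc n → Euc M} (hu : Measurable u)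
    (huS : ∀ x, ‖u x‖ = 1) (x : Euc n) (r : ℝ) (a : Euc M) :
    ‖VV u x r - a‖ₑ ^ p ≤ ∫⁻ z, ‖u (x + r • z) - a‖ₑ ^ p ∂(lam n) := by
  have h1 : VV u x r - a = ∫ z, (u (x + r • z) - a) ∂(lam n) := by
    rw [integral_sub (int_of_bdd (C := 1) (by fun_prop) (fun z => (huS _).le)) (integrable_const _)]
    simp [VV]
  rw [h1]
  exact jensen_lam hp _ (Measurable.aestronglyMeasurable (by fun_prop))

lemma avg_dbl {n M : ℕ} {p : ℝ} {u : Euc n → Euc M} (hu : Measurable u)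
    (x y : Euc n) {r r' ρ : ℝ} (hr : 0 < r) (hr' : 0 < r') (hρ : ‖x - y‖ + r + r' ≤ ρ) :
    ∫⁻ z, ∫⁻ z', ‖u (x + r • z) - u (y + r' • z')‖ₑ ^ p ∂(lam n) ∂(lam n) ≤
      ENNReal.ofReal ρ ^ (2 * n) * ((ENNReal.ofReal r ^ n * om n)⁻¹ * (ENNReal.ofReal r' ^ n * om n)⁻¹) *
        ∫⁻ q in closedBall x r ×ˢ closedBall y r', ed p u q := by
  have hm := ed_meas (p := p) hu
  have hρ0 : 0 < ρ := by linarith [norm_nonneg (x - y)]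
  have h1 : ∀ a, ∫⁻ z', ‖u a - u (y + r' • z')‖ₑ ^ p ∂(lam n)
      = (ENNReal.ofReal r' ^ n * om n)⁻¹ * ∫⁻ b in closedBall y r', ‖u a - u b‖ₑ ^ p :=
    fun a => lintegral_lam y hr' (f := fun b => ‖u a - u b‖ₑ ^ p) (by fun_prop)
  simp_rw [h1]
  have hmm : Measurable fun q : Euc n × Euc n => ‖u q.1 - u q.2‖ₑ ^ p := by fun_prop
  rw [lintegral_lam x hr (f := fun a => (ENNReal.ofReal r' ^ n * om n)⁻¹ * ∫⁻ b in closedBall y r', ‖u a - u b‖ₑ ^ p)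
    (hmm.lintegral_prod_right'.const_mul _), lintegral_const_mul _ hmm.lintegral_prod_right']
  have h2 : ∫⁻ a in closedBall x r, ∫⁻ b in closedBall y r', ‖u a - u b‖ₑ ^ p ≤
      ENNReal.ofReal ρ ^ (2 * n) * ∫⁻ q in closedBall x r ×ˢ closedBall y r', ed p u q := by
    rw [Measure.volume_eq_prod, ← Measure.prod_restrict, lintegral_prod _ hm.aemeasurable,
      ← lintegral_const_mul _ hm.lintegral_prod_right']
    refine setLIntegral_mono' measurableSet_closedBall fun a ha => ?_
    rw [← lintegral_const_mul _ (by fun_prop)]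
    refine setLIntegral_mono' measurableSet_closedBall fun b hb => ?_
    rw [mem_closedBall, dist_eq_norm] at ha hb
    simp only [ed]
    by_cases hab : a = b
    · subst hab
      rcases eq_or_ne (‖u a - u a‖ₑ ^ p) 0 with h | h
      · rw [h]; simp
      · simp only [sub_self, enorm_zero]
        rcases Nat.eq_zero_or_pos n with hn | hn
        · simp [hn]
        · rw [zero_pow (by omega), ENNReal.inv_zero]
          have h' : (0 : ℝ≥0∞) ^ p ≠ 0 := by simpa using h
          rw [ENNReal.mul_top h', ENNReal.mul_top (by simp [hρ0])]
          exact le_top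
    · have h3 : ‖a - b‖ₑ ≤ ENNReal.ofReal ρ := by
        rw [← ofReal_norm]
        apply ENNReal.ofReal_le_ofReal
        have t1 := tri a x b
        have t2 := tri x y b
        rw [norm_sub_rev y b] at t2
        linarith
      have h4 : ‖a - b‖ₑ ^ (2 * n) * (‖a - b‖ₑ ^ (2 * n))⁻¹ = 1 :=
        ENNReal.mul_inv_cancel (by simp [sub_eq_zero, hab]) (by simp)
      calc _ = ‖a - b‖ₑ ^ (2 * n) * (‖a - b‖ₑ ^ (2 * n))⁻¹ * ‖u a - u b‖ₑ ^ p := by rw [h4, one_mul]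
        _ ≤ ENNReal.ofReal ρ ^ (2 * n) * (‖a - b‖ₑ ^ (2 * n))⁻¹ * ‖u a - u b‖ₑ ^ p := by gcongr
        _ = _ := by ring
  calc _ ≤ (ENNReal.ofReal r ^ n * om n)⁻¹ * ((ENNReal.ofReal r' ^ n * om n)⁻¹ * (ENNReal.ofReal ρ ^ (2 * n) * ∫⁻ q in closedBall x r ×ˢ closedBall y r', ed p u q)) := by gcongr
    _ = _ := by ring

lemma avg_diff {n M : ℕ} {p : ℝ} (hp : 1 ≤ p) {u : Euc n → Euc M} (hu : Measurable u)
    (huS : ∀ x, ‖u x‖ = 1)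
    (x y : Euc n) {r r' ρ : ℝ} (hr : 0 < r) (hr' : 0 < r') (hρ : ‖x - y‖ + r + r' ≤ ρ) :
    ‖VV u x r - VV u y r'‖ₑ ^ p ≤
      ENNReal.ofReal ρ ^ (2 * n) * ((ENNReal.ofReal r ^ n * om n)⁻¹ * (ENNReal.ofReal r' ^ n * om n)⁻¹) *
        ∫⁻ q in closedBall x r ×ˢ closedBall y r', ed p u q := by
  refine le_trans ?_ (avg_dbl hu x y hr hr' hρ)
  refine (avg_pt hp hu huS x r _).trans (lintegral_mono fun z => ?_)
  rw [← enorm_neg, neg_sub]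
  refine (avg_pt hp hu huS y r' _).trans (le_of_eq (lintegral_congr fun z' => ?_))
  rw [← enorm_neg, neg_sub]

/-- the scaling constant -/
def C1 (n : ℕ) (k : ℝ) : ℝ≥0∞ := ENNReal.ofReal k ^ (2 * n) * ((om n)⁻¹ * (om n)⁻¹)

lemma C1_ne_top (n : ℕ) (k : ℝ) : C1 n k ≠ ⊤ := by
  have := om_ne_zero n
  unfold C1; finiteness

lemma scale_const {n : ℕ} {k k' r : ℝ} (hr : 0 < r) (hk : 0 ≤ k) (hk' : 0 < k') :
    ENNReal.ofReal (k * r) ^ (2 * n) * ((ENNReal.ofReal r ^ n * om n)⁻¹ * (ENNReal.ofReal (k' * r) ^ n * om n)⁻¹)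
      = C1 n k * (ENNReal.ofReal k' ^ n)⁻¹ := by
  have h0 : ENNReal.ofReal r ^ n ≠ 0 := by simp [hr]
  have h1 : ENNReal.ofReal r ^ n ≠ ⊤ := by simp
  have h2 : ENNReal.ofReal k' ^ n ≠ 0 := by simp [hk']
  rw [ENNReal.ofReal_mul hk, ENNReal.ofReal_mul hk'.le, mul_pow, mul_pow,
    ENNReal.mul_inv (Or.inl h0) (Or.inl h1), ENNReal.mul_inv (Or.inr (om_ne_top n)) (Or.inr (om_ne_zero n)),
    ENNReal.mul_inv (Or.inl h2) (Or.inl (by simp)), C1]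
  have h3 : ENNReal.ofReal r ^ (2 * n) * ((ENNReal.ofReal r ^ n)⁻¹ * (ENNReal.ofReal r ^ n)⁻¹) = 1 := by
    rw [← ENNReal.mul_inv (Or.inl h0) (Or.inl h1), two_mul, pow_add]
    exact ENNReal.mul_inv_cancel (mul_ne_zero h0 h0) (ENNReal.mul_ne_top h1 h1)
  calc _ = ENNReal.ofReal k ^ (2 * n) * ((om n)⁻¹ * (om n)⁻¹) * (ENNReal.ofReal k' ^ n)⁻¹ *
        (ENNReal.ofReal r ^ (2 * n) * ((ENNReal.ofReal r ^ n)⁻¹ * (ENNReal.ofReal r ^ n)⁻¹)) := by ring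
    _ = _ := by rw [h3, mul_one]

lemma avg_sphere {n M : ℕ} {p : ℝ} (hp : 1 ≤ p) {u : Euc n → Euc M} (hu : Measurable u)
    (huS : ∀ x, ‖u x‖ = 1) (x : Euc n) {r : ℝ} (hr : 0 < r) :
    ENNReal.ofReal (1 - ‖VV u x r‖) ^ p ≤
      C1 n 2 * ∫⁻ q in closedBall x r ×ˢ closedBall x r, ed p u q := by
  have hp0 : 0 ≤ p := by linarith
  have h1 := avg_dbl (p := p) hu x x hr hr (ρ := 2 * r) (by simp; linarith)
  have h2 := scale_const (n := n) (k := 2) (k' := 1) hr (by norm_num) (by norm_num)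
  rw [one_mul] at h2
  rw [h2] at h1
  simp only [ENNReal.ofReal_one, one_pow, inv_one, mul_one] at h1
  refine le_trans ?_ h1
  calc ENNReal.ofReal (1 - ‖VV u x r‖) ^ p = ∫⁻ z, ENNReal.ofReal (1 - ‖VV u x r‖) ^ p ∂(lam n) := by simp
    _ ≤ _ := by
      refine lintegral_mono fun z => ?_
      calc _ ≤ ‖VV u x r - u (x + r • z)‖ₑ ^ p := by
            gcongr
            rw [← ofReal_norm]
            apply ENNReal.ofReal_le_ofReal
            have := norm_sub_norm_le (u (x + r • z)) (VV u x r)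
            rw [huS, norm_sub_rev] at this
            exact this
        _ ≤ _ := avg_pt hp hu huS x r _
        _ = _ := lintegral_congr fun z' => by rw [← enorm_neg, neg_sub]

/-- pairs touching the ball -/
def SS {n : ℕ} (x0 : Euc n) (R : ℝ) : Set (Euc n × Euc n) := {q | ‖q.1 - x0‖ < R ∨ ‖q.2 - x0‖ < R}
/-- outside the core -/
def NN {n : ℕ} (x0 : Euc n) (R : ℝ) : Set (Euc n) := {x | R / 4 ≤ ‖x - x0‖}
/-- pairs touching the ball, none in the core -/
def AA {n : ℕ} (x0 : Euc n) (R : ℝ) : Set (Euc n × Euc n) := SS x0 R ∩ (NN x0 R ×ˢ NN x0 R)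

lemma SS_meas {n : ℕ} (x0 : Euc n) (R : ℝ) : MeasurableSet (SS x0 R) := by
  have h1 : MeasurableSet {q : Euc n × Euc n | ‖q.1 - x0‖ < R} :=
    measurableSet_lt (by fun_prop) (by fun_prop)
  have h2 : MeasurableSet {q : Euc n × Euc n | ‖q.2 - x0‖ < R} :=
    measurableSet_lt (by fun_prop) (by fun_prop)
  exact h1.union h2
lemma NN_meas {n : ℕ} (x0 : Euc n) (R : ℝ) : MeasurableSet (NN x0 R) :=
  measurableSet_le (by fun_prop) (by fun_prop)
lemma AA_meas {n : ℕ} (x0 : Euc n) (R : ℝ) : MeasurableSet (AA x0 R) :=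
  (SS_meas x0 R).inter ((NN_meas x0 R).prod (NN_meas x0 R))

/-- weighted distance to a constant -/
def Fw {n M : ℕ} (p : ℝ) (u : Euc n → Euc M) (x0 : Euc n) (R : ℝ) (c : Euc M) : ℝ≥0∞ :=
  ∫⁻ y in NN x0 R, ‖u y - c‖ₑ ^ p * wt x0 R y

lemma choose_c {n : ℕ} (M : ℕ) (hn : 1 ≤ n) (p : ℝ) :
    ∃ C : ℝ≥0∞, C ≠ ⊤ ∧ ∀ (u : Euc n → Euc M), Measurable u → ∀ (x0 : Euc n) (R : ℝ), 0 < R →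
      ∃ z0, Fw p u x0 R (u z0) ≤ C * ∫⁻ q in AA x0 R, ed p u q := by
  have : Nonempty (Fin n) := ⟨⟨0, hn⟩⟩
  refine ⟨8 ^ n * (om n)⁻¹, by have := om_ne_zero n; finiteness, ?_⟩
  intro u hu x0 R hR
  obtain ⟨e, he⟩ := exists_norm_eq (Euc n) (c := 3 / 4 * R) (by positivity)
  set D := closedBall (x0 + e) (R / 8) with hD
  have hDR : ∀ z ∈ D, ‖z - x0‖ < R ∧ R / 4 ≤ ‖z - x0‖ := by
    intro z hz
    rw [hD, mem_closedBall, dist_eq_norm] at hz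
    have t1 := tri z (x0 + e) x0
    have t2 := tri (x0 + e) z x0
    rw [norm_sub_rev (x0 + e) z] at t2
    simp only [add_sub_cancel_left, he] at t1 t2
    constructor <;> linarith
  have hvol := vol_closedBall (x0 + e) (r := R / 8) (by positivity)
  have hm : Measurable fun q : Euc n × Euc n => ‖u q.2 - u q.1‖ₑ ^ p * wt x0 R q.2 := by
    have := wt_meas x0 R
    fun_prop
  obtain ⟨z0, -, h⟩ := exists_le_setLAverage (μ := volume) (s := D) (f := fun z => Fw p u x0 R (u z))
    (measure_closedBall_pos _ _ (by positivity)).ne' measure_closedBall_lt_top.ne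
    (hm.lintegral_prod_right').aemeasurable
  refine ⟨z0, h.trans ?_⟩
  rw [setLAverage_eq, hvol]
  have h2 : ∫⁻ z in D, Fw p u x0 R (u z) ≤ ENNReal.ofReal R ^ n * ∫⁻ q in AA x0 R, ed p u q := by
    calc _ ≤ ∫⁻ z in D, ∫⁻ y in NN x0 R, ENNReal.ofReal R ^ n * ed p u (z, y) := by
          refine setLIntegral_mono' measurableSet_closedBall fun z hz => ?_
          refine setLIntegral_mono' (NN_meas _ _) fun y hy => ?_
          have hz' := hDR z hz
          have h3 : ‖z - y‖ₑ ≤ ENNReal.ofReal (R + ‖y - x0‖) := by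
            rw [← ofReal_norm]
            apply ENNReal.ofReal_le_ofReal
            have := tri z x0 y
            rw [norm_sub_rev x0 y] at this
            linarith
          simp only [ed, wt]
          rw [← enorm_neg (u y - u z), neg_sub]
          calc _ ≤ ‖u z - u y‖ₑ ^ p * (ENNReal.ofReal R ^ n * (‖z - y‖ₑ ^ (2 * n))⁻¹) := by gcongr
            _ = _ := by ring
      _ = ENNReal.ofReal R ^ n * ∫⁻ q in D ×ˢ NN x0 R, ed p u q := by
          have hem := ed_meas (p := p) hu
          rw [Measure.volume_eq_prod, ← Measure.prod_restrict, lintegral_prod _ hem.aemeasurable,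
            ← lintegral_const_mul _ hem.lintegral_prod_right']
          refine lintegral_congr fun z => ?_
          rw [lintegral_const_mul _ (by fun_prop)]
      _ ≤ _ := by
          gcongr
          rintro ⟨a, b⟩ ⟨ha, hb⟩
          exact ⟨Or.inl (hDR a ha).1, (hDR a ha).2, hb⟩
  rw [ENNReal.div_eq_inv_mul]
  calc _ ≤ (ENNReal.ofReal (R / 8) ^ n * om n)⁻¹ * (ENNReal.ofReal R ^ n * ∫⁻ q in AA x0 R, ed p u q) := by gcongr
    _ = (8 ^ n * (om n)⁻¹) * ((ENNReal.ofReal (R / 8) ^ n)⁻¹ * ENNReal.ofReal (R / 8) ^ n) * ∫⁻ q in AA x0 R, ed p u q := by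
        have e1 : ENNReal.ofReal R = 8 * ENNReal.ofReal (R / 8) := by
          rw [← ENNReal.ofReal_ofNat 8, ← ENNReal.ofReal_mul (by norm_num)]; congr 1; ring
        rw [ENNReal.mul_inv (Or.inr (om_ne_top n)) (Or.inr (om_ne_zero n)), e1, mul_pow, ENNReal.ofReal_div_of_pos (by norm_num)]
        ring
    _ = _ := by
        rw [ENNReal.inv_mul_cancel (by simp [hR]) (by simp), mul_one]

/-- the unnormalised competitor -/
def ww {n M : ℕ} (u : Euc n → Euc M) (x0 : Euc n) (R : ℝ) (c : Euc M) (x : Euc n) : Euc M :=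
  c + gg x0 R x • (VV u x (dl x0 R x) - c)

lemma ww_meas {n M : ℕ} {u : Euc n → Euc M} (hu : Measurable u) (x0 : Euc n) (R : ℝ) (c : Euc M) :
    Measurable (ww u x0 R c) := by
  have h1 : Measurable fun q : Euc n × Euc n => u (q.1 + dl x0 R q.1 • q.2) := by
    have := (dl_cont x0 R).measurable
    fun_prop
  have h2 : Measurable fun x => VV u x (dl x0 R x) :=
    (h1.stronglyMeasurable.integral_prod_right' (ν := lam n)).measurable
  have h3 := (gg_cont x0 R).measurable
  unfold ww
  fun_prop

lemma ww_out {n M : ℕ} {u : Euc n → Euc M} {x0 : Euc n} {R : ℝ} (hR : 0 < R) (c : Euc M) {x : Euc n}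
    (hx : R ≤ ‖x - x0‖) : ww u x0 R c x = u x := by
  have h1 : dl x0 R x = 0 := by unfold dl; rw [max_eq_right (by linarith)]; simp
  simp [ww, gg_one x0 hR (x := x) (by linarith), VV, h1]

lemma ofReal_le_two_mul {a b : ℝ} (h : a ≤ 2 * b) : ENNReal.ofReal a ≤ 2 * ENNReal.ofReal b := by
  have h4 := ENNReal.ofReal_le_ofReal h
  rwa [ENNReal.ofReal_mul (by norm_num), ENNReal.ofReal_ofNat] at h4

lemma rpow_half_le {a : ℝ≥0∞} {p : ℝ} (hp : 0 < p) (h : a ^ p ≤ ENNReal.ofReal (1 / 2) ^ p) :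
    a ≤ ENNReal.ofReal (1 / 2) := (ENNReal.rpow_le_rpow_iff hp).1 h

lemma ww_lower {n M : ℕ} {p : ℝ} (hp : 1 ≤ p) {u : Euc n → Euc M} (hu : Measurable u)
    (huS : ∀ x, ‖u x‖ = 1) {x0 : Euc n} {R : ℝ} (hR : 0 < R) {c : Euc M} (hc : ‖c‖ = 1)
    (h1 : C1 n 2 * ∫⁻ q in AA x0 R, ed p u q ≤ ENNReal.ofReal (1 / 2) ^ p)
    (h2 : 16 ^ n * 2 ^ (2 * n) * (om n)⁻¹ * Fw p u x0 R c ≤ ENNReal.ofReal (1 / 2) ^ p) (x : Euc n) :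
    1 / 2 ≤ ‖ww u x0 R c x‖ := by
  have hp0 : 0 < p := by linarith
  rcases le_or_gt R ‖x - x0‖ with hx | hx
  · rw [ww_out hR c hx, huS]; norm_num
  have hdl := dl_in x0 hx.le
  have hd0 : 0 < dl x0 R x := by rw [hdl]; linarith
  have hball : ∀ y ∈ closedBall x (dl x0 R x), ‖y - x0‖ < R := by
    intro y hy
    rw [mem_closedBall, dist_eq_norm, hdl] at hy
    have := tri y x x0
    linarith
  have hball2 : R / 2 ≤ ‖x - x0‖ → ∀ y ∈ closedBall x (dl x0 R x), y ∈ NN x0 R := by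
    intro hx2 y hy
    rw [mem_closedBall, dist_eq_norm, hdl] at hy
    have := tri x y x0
    rw [norm_sub_rev x y] at this
    show R / 4 ≤ ‖y - x0‖
    linarith
  rcases le_or_gt (3 / 4 * R) ‖x - x0‖ with hx3 | hx3
  · have e : ww u x0 R c x = VV u x (dl x0 R x) := by simp [ww, gg_one x0 hR hx3]
    rw [e]
    have h3 := avg_sphere hp hu huS x hd0
    have hsub : closedBall x (dl x0 R x) ×ˢ closedBall x (dl x0 R x) ⊆ AA x0 R := by
      rintro ⟨a, b⟩ ⟨ha, hb⟩
      exact ⟨Or.inl (hball a ha), hball2 (by linarith) a ha, hball2 (by linarith) b hb⟩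
    have h4 : ENNReal.ofReal (1 - ‖VV u x (dl x0 R x)‖) ^ p ≤ ENNReal.ofReal (1 / 2) ^ p := by
      refine h3.trans (le_trans ?_ h1)
      gcongr
    have h5 := rpow_half_le hp0 h4
    rw [ENNReal.ofReal_le_ofReal_iff (by norm_num)] at h5
    linarith
  rcases lt_or_ge ‖x - x0‖ (R / 2) with hx2 | hx2
  · have e : ww u x0 R c x = c := by simp [ww, gg_zero x0 hR hx2]
    rw [e, hc]; norm_num
  · have hdR : R / 16 ≤ dl x0 R x := by rw [hdl]; linarith
    have h3 : ‖VV u x (dl x0 R x) - c‖ₑ ^ p ≤ ENNReal.ofReal (1 / 2) ^ p := by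
      refine (avg_pt hp hu huS x _ c).trans (le_trans ?_ h2)
      rw [lintegral_lam x hd0 (f := fun y => ‖u y - c‖ₑ ^ p) (by fun_prop)]
      have hwt : ∀ y ∈ closedBall x (dl x0 R x), 1 ≤ 2 ^ (2 * n) * ENNReal.ofReal R ^ n * wt x0 R y := by
        intro y hy
        have h5 := hball y hy
        have h6 : (ENNReal.ofReal R ^ (2 * n))⁻¹ ≤ 2 ^ (2 * n) * (ENNReal.ofReal (R + ‖y - x0‖) ^ (2 * n))⁻¹ := by
          refine inv_pow_le (by norm_num) (by norm_num) ?_ _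
          exact ofReal_le_two_mul (by linarith)
        calc (1 : ℝ≥0∞) = ENNReal.ofReal R ^ (2 * n) * (ENNReal.ofReal R ^ (2 * n))⁻¹ :=
              (ENNReal.mul_inv_cancel (by simp [hR]) (by simp)).symm
          _ ≤ ENNReal.ofReal R ^ (2 * n) * (2 ^ (2 * n) * (ENNReal.ofReal (R + ‖y - x0‖) ^ (2 * n))⁻¹) := by gcongr
          _ = _ := by rw [wt, two_mul n, pow_add (ENNReal.ofReal R)]; ring
      have h7 : ∫⁻ y in closedBall x (dl x0 R x), ‖u y - c‖ₑ ^ p ≤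
          2 ^ (2 * n) * ENNReal.ofReal R ^ n * Fw p u x0 R c := by
        have hmw := wt_meas x0 R
        rw [Fw, ← lintegral_const_mul _ (by fun_prop)]
        calc _ ≤ ∫⁻ y in closedBall x (dl x0 R x), 2 ^ (2 * n) * ENNReal.ofReal R ^ n * (‖u y - c‖ₑ ^ p * wt x0 R y) := by
              refine setLIntegral_mono' measurableSet_closedBall fun y hy => ?_
              calc _ = 1 * ‖u y - c‖ₑ ^ p := (one_mul _).symm
                _ ≤ (2 ^ (2 * n) * ENNReal.ofReal R ^ n * wt x0 R y) * ‖u y - c‖ₑ ^ p := by gcongr; exact hwt y hy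
                _ = _ := by ring
          _ ≤ _ := lintegral_mono_set (hball2 hx2)
      have h8 : (ENNReal.ofReal (dl x0 R x) ^ n)⁻¹ ≤ 16 ^ n * (ENNReal.ofReal R ^ n)⁻¹ := by
        refine inv_pow_le (by norm_num) (by norm_num) ?_ _
        rw [← ENNReal.ofReal_ofNat 16, ← ENNReal.ofReal_mul (by norm_num)]
        exact ENNReal.ofReal_le_ofReal (by linarith)
      calc _ ≤ (ENNReal.ofReal (dl x0 R x) ^ n)⁻¹ * (om n)⁻¹ * (2 ^ (2 * n) * ENNReal.ofReal R ^ n * Fw p u x0 R c) := by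
            rw [ENNReal.mul_inv (Or.inr (om_ne_top n)) (Or.inr (om_ne_zero n))]
            gcongr
        _ ≤ 16 ^ n * (ENNReal.ofReal R ^ n)⁻¹ * (om n)⁻¹ * (2 ^ (2 * n) * ENNReal.ofReal R ^ n * Fw p u x0 R c) := by gcongr
        _ = 16 ^ n * 2 ^ (2 * n) * (om n)⁻¹ * Fw p u x0 R c * ((ENNReal.ofReal R ^ n)⁻¹ * ENNReal.ofReal R ^ n) := by ring
        _ = _ := by rw [ENNReal.inv_mul_cancel (by simp [hR]) (by simp), mul_one]
    have h5 := rpow_half_le hp0 h3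
    rw [← ofReal_norm, ENNReal.ofReal_le_ofReal_iff (by norm_num)] at h5
    have h6 : ‖ww u x0 R c x - c‖ ≤ 1 / 2 := by
      simp only [ww, add_sub_cancel_left, norm_smul, Real.norm_eq_abs, abs_of_nonneg (gg_nonneg x0 R x)]
      have := gg_le_one x0 R x
      have := gg_nonneg x0 R x
      nlinarith [norm_nonneg (VV u x (dl x0 R x) - c)]
    have h7 := norm_sub_norm_le c (ww u x0 R c x)
    rw [norm_sub_rev, hc] at h7
    linarith

lemma pt_bound {n M : ℕ} {p : ℝ} (hp : 1 ≤ p) {u : Euc n → Euc M} {x0 : Euc n} {R : ℝ} (hR : 0 < R)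
    (c : Euc M) {z : Euc n} (hz : ‖z‖ ≤ 1) {x y : Euc n} (hq : (x, y) ∈ SS x0 R) :
    ‖gg x0 R x • (u (TT x0 R z x) - c) - gg x0 R y • (u (TT x0 R z y) - c)‖ₑ ^ p * (‖x - y‖ₑ ^ (2 * n))⁻¹
      ≤ 2 ^ (p - 1) * (2 ^ (2 * n) * (AA x0 R).indicator (ed p u) (TT x0 R z x, TT x0 R z y) +
        (‖gg x0 R x - gg x0 R y‖ₑ ^ p * (‖x - y‖ₑ ^ (2 * n))⁻¹ * (NN x0 R).indicator (fun a => ‖u a - c‖ₑ ^ p) (TT x0 R z y)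
        + ‖gg x0 R y - gg x0 R x‖ₑ ^ p * (‖y - x‖ₑ ^ (2 * n))⁻¹ * (NN x0 R).indicator (fun a => ‖u a - c‖ₑ ^ p) (TT x0 R z x))) := by
  have hp0 : 0 < p := by linarith
  have h2p : (1 : ℝ≥0∞) ≤ 2 ^ (p - 1) := by
    simpa using ENNReal.rpow_le_rpow_of_exponent_le (x := 2) (by norm_num) (by linarith : 0 ≤ p - 1)
  have hker : (‖x - y‖ₑ ^ (2 * n))⁻¹ ≤ 2 ^ (2 * n) * (‖TT x0 R z x - TT x0 R z y‖ₑ ^ (2 * n))⁻¹ :=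
    inv_pow_le (by norm_num) (by norm_num) (TT_lip x0 hz x y) _
  rcases lt_or_ge ‖x - x0‖ (R / 2) with hx | hx <;> rcases lt_or_ge ‖y - x0‖ (R / 2) with hy | hy
  · simp [gg_zero x0 hR hx, gg_zero x0 hR hy, ENNReal.zero_rpow_of_pos hp0]
  · have hy' : TT x0 R z y ∈ NN x0 R := TT_far x0 hz hR hy
    rw [gg_zero x0 hR hx, zero_smul, indicator_of_mem hy']
    simp only [zero_sub, enorm_neg, enorm_smul]
    rw [ENNReal.mul_rpow_of_nonneg _ _ hp0.le]
    refine le_trans ?_ (le_mul_of_one_le_left (zero_le) h2p)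
    refine le_trans ?_ le_add_self
    refine le_trans (le_of_eq ?_) le_self_add
    ring
  · have hx' : TT x0 R z x ∈ NN x0 R := TT_far x0 hz hR hx
    rw [gg_zero x0 hR hy, zero_smul, indicator_of_mem hx']
    simp only [zero_sub, sub_zero, enorm_neg, enorm_smul]
    rw [ENNReal.mul_rpow_of_nonneg _ _ hp0.le]
    refine le_trans ?_ (le_mul_of_one_le_left (zero_le) h2p)
    refine le_trans ?_ le_add_self
    refine le_trans (le_of_eq ?_) le_add_self
    rw [← enorm_neg (y - x), neg_sub]
    ring
  · have hy' : TT x0 R z y ∈ NN x0 R := TT_far x0 hz hR hy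
    have hx' : TT x0 R z x ∈ NN x0 R := TT_far x0 hz hR hx
    have hA : (TT x0 R z x, TT x0 R z y) ∈ AA x0 R := by
      refine ⟨?_, hx', hy'⟩
      rcases hq with h | h
      · exact Or.inl (TT_in x0 hz h)
      · exact Or.inr (TT_in x0 hz h)
    rw [indicator_of_mem hA, indicator_of_mem hy']
    have e1 : gg x0 R x • (u (TT x0 R z x) - c) - gg x0 R y • (u (TT x0 R z y) - c)
      = gg x0 R x • (u (TT x0 R z x) - u (TT x0 R z y)) + (gg x0 R x - gg x0 R y) • (u (TT x0 R z y) - c) := by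
      module
    have e2 : ‖gg x0 R x‖ₑ ≤ 1 := by
      rw [← ofReal_norm, Real.norm_eq_abs, abs_of_nonneg (gg_nonneg x0 R x)]
      simpa using gg_le_one x0 R x
    have e3 : ‖gg x0 R x • (u (TT x0 R z x) - c) - gg x0 R y • (u (TT x0 R z y) - c)‖ₑ ≤
        ‖u (TT x0 R z x) - u (TT x0 R z y)‖ₑ + ‖gg x0 R x - gg x0 R y‖ₑ * ‖u (TT x0 R z y) - c‖ₑ := by
      rw [e1]
      refine (enorm_add_le _ _).trans ?_
      rw [enorm_smul, enorm_smul]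
      gcongr
      exact mul_le_of_le_one_left (zero_le) e2
    calc _ ≤ (‖u (TT x0 R z x) - u (TT x0 R z y)‖ₑ + ‖gg x0 R x - gg x0 R y‖ₑ * ‖u (TT x0 R z y) - c‖ₑ) ^ p * (‖x - y‖ₑ ^ (2 * n))⁻¹ := by gcongr
      _ ≤ (2 ^ (p - 1) * (‖u (TT x0 R z x) - u (TT x0 R z y)‖ₑ ^ p + (‖gg x0 R x - gg x0 R y‖ₑ * ‖u (TT x0 R z y) - c‖ₑ) ^ p)) * (‖x - y‖ₑ ^ (2 * n))⁻¹ := by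
          gcongr; exact ENNReal.rpow_add_le_mul_rpow_add_rpow _ _ hp
      _ = 2 ^ (p - 1) * (‖u (TT x0 R z x) - u (TT x0 R z y)‖ₑ ^ p * (‖x - y‖ₑ ^ (2 * n))⁻¹ + ‖gg x0 R x - gg x0 R y‖ₑ ^ p * (‖x - y‖ₑ ^ (2 * n))⁻¹ * ‖u (TT x0 R z y) - c‖ₑ ^ p) := by
          rw [ENNReal.mul_rpow_of_nonneg _ _ hp0.le]; ring
      _ ≤ _ := by
          refine mul_le_mul_right (add_le_add ?_ le_self_add) _
          · simp only [ed]
            calc _ ≤ ‖u (TT x0 R z x) - u (TT x0 R z y)‖ₑ ^ p * (2 ^ (2 * n) * (‖TT x0 R z x - TT x0 R z y‖ₑ ^ (2 * n))⁻¹) := by gcongr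
              _ = _ := by ring

lemma H2_bound {n M : ℕ} {p : ℝ} {u : Euc n → Euc M} (hu : Measurable u) {C : ℝ≥0∞}
    {x0 : Euc n} {R : ℝ} (hR : 0 < R)
    (hC : ∀ y, ∫⁻ x, ‖gg x0 R x - gg x0 R y‖ₑ ^ p * (‖x - y‖ₑ ^ (2 * n))⁻¹ ≤ C * wt x0 R y)
    (c : Euc M) {z : Euc n} (hz : ‖z‖ ≤ 1) :
    ∫⁻ y, ∫⁻ x, ‖gg x0 R x - gg x0 R y‖ₑ ^ p * (‖x - y‖ₑ ^ (2 * n))⁻¹ *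
      (NN x0 R).indicator (fun a => ‖u a - c‖ₑ ^ p) (TT x0 R z y) ≤ C * 2 ^ (2 * n) * 2 ^ n * Fw p u x0 R c := by
  have hg := (gg_cont x0 R).measurable
  have hT : Measurable (TT x0 R z) :=
    (TT_cont x0 R).measurable.comp (by fun_prop : Measurable fun x : Euc n => (z, x))
  have hφ : Measurable ((NN x0 R).indicator (fun a => ‖u a - c‖ₑ ^ p)) :=
    (by fun_prop : Measurable fun a => ‖u a - c‖ₑ ^ p).indicator (NN_meas x0 R)
  have hw := wt_meas x0 R
  calc _ ≤ ∫⁻ y, C * 2 ^ (2 * n) * ((fun a => (NN x0 R).indicator (fun a => ‖u a - c‖ₑ ^ p) a * wt x0 R a) (TT x0 R z y)) := by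
        refine lintegral_mono fun y => ?_
        rw [lintegral_mul_const _ (by fun_prop)]
        have h1 : wt x0 R y ≤ 2 ^ (2 * n) * wt x0 R (TT x0 R z y) := by
          unfold wt
          calc _ ≤ ENNReal.ofReal R ^ n * (2 ^ (2 * n) * (ENNReal.ofReal (R + ‖TT x0 R z y - x0‖) ^ (2 * n))⁻¹) := by
                gcongr
                refine inv_pow_le (by norm_num) (by norm_num) ?_ _
                exact ofReal_le_two_mul (TT_wt x0 hz y hR)
            _ = _ := by ring
        calc _ ≤ (C * (2 ^ (2 * n) * wt x0 R (TT x0 R z y))) * (NN x0 R).indicator (fun a => ‖u a - c‖ₑ ^ p) (TT x0 R z y) := by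
              gcongr
              exact (hC y).trans (by gcongr)
          _ = _ := by ring
    _ ≤ C * 2 ^ (2 * n) * (2 ^ n * ∫⁻ a, (NN x0 R).indicator (fun a => ‖u a - c‖ₑ ^ p) a * wt x0 R a) := by
        rw [lintegral_const_mul _ (by fun_prop)]
        gcongr
        exact lintegral_comp_anti (TT_anti x0 hz) hT
          (f := fun a => (NN x0 R).indicator (fun a => ‖u a - c‖ₑ ^ p) a * wt x0 R a) (by fun_prop)
    _ = _ := by
        have : ∫⁻ a, (NN x0 R).indicator (fun a => ‖u a - c‖ₑ ^ p) a * wt x0 R a = Fw p u x0 R c := by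
          rw [Fw, ← lintegral_indicator (NN_meas x0 R)]
          refine lintegral_congr fun a => ?_
          by_cases ha : a ∈ NN x0 R <;> simp [ha]
        rw [this]; ring

lemma ww_diff {n M : ℕ} {u : Euc n → Euc M} (hu : Measurable u)
    (huS : ∀ x, ‖u x‖ = 1) (x0 : Euc n) (R : ℝ) (c : Euc M) (x y : Euc n) :
    ww u x0 R c x - ww u x0 R c y =
      ∫ z, (gg x0 R x • (u (TT x0 R z x) - c) - gg x0 R y • (u (TT x0 R z y) - c)) ∂(lam n) := by
  have hi : ∀ x, Integrable (fun z => u (TT x0 R z x)) (lam n) := fun x => by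
    refine int_of_bdd (C := 1) ?_ (fun z => (huS _).le)
    unfold TT; fun_prop
  have hV : ∀ x, gg x0 R x • (VV u x (dl x0 R x) - c) = ∫ z, gg x0 R x • (u (TT x0 R z x) - c) ∂(lam n) := by
    intro x
    rw [integral_smul, integral_sub (hi x) (integrable_const _)]
    simp [VV, TT]
  rw [integral_sub, ← hV, ← hV, ww, ww]
  · abel
  · exact ((hi x).sub (integrable_const c)).smul (gg x0 R x)
  · exact ((hi y).sub (integrable_const c)).smul (gg x0 R y)

lemma three_piece {n : ℕ} {S : Set (Euc n × Euc n)} (hS : MeasurableSet S) {f : Euc n × Euc n → ℝ≥0∞}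
    (H1 H2 H3 : (Euc n × Euc n) → Euc n → ℝ≥0∞) (hH1 : Measurable (Function.uncurry H1))
    (hH2 : Measurable (Function.uncurry H2)) (hH3 : Measurable (Function.uncurry H3))
    {a b A1 A2 A3 : ℝ≥0∞}
    (I1 : ∀ z : Euc n, ‖z‖ ≤ 1 → ∫⁻ q, H1 q z ≤ A1)
    (I2 : ∀ z : Euc n, ‖z‖ ≤ 1 → ∫⁻ q, H2 q z ≤ A2)
    (I3 : ∀ z : Euc n, ‖z‖ ≤ 1 → ∫⁻ q, H3 q z ≤ A3)
    (step1 : ∀ q ∈ S, f q ≤ ∫⁻ z, a * (b * H1 q z + (H2 q z + H3 q z)) ∂(lam n)) :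
    ∫⁻ q in S, f q ≤ a * (b * A1 + (A2 + A3)) := by
  have hH : Measurable (Function.uncurry fun q z => a * (b * H1 q z + (H2 q z + H3 q z))) :=
    (((hH1.const_mul _).add (hH2.add hH3)).const_mul _)
  calc _ ≤ ∫⁻ q in S, ∫⁻ z, a * (b * H1 q z + (H2 q z + H3 q z)) ∂(lam n) := setLIntegral_mono' hS step1
    _ ≤ ∫⁻ q, ∫⁻ z, a * (b * H1 q z + (H2 q z + H3 q z)) ∂(lam n) := setLIntegral_le_lintegral _ _
    _ = ∫⁻ z, (∫⁻ q, a * (b * H1 q z + (H2 q z + H3 q z))) ∂(lam n) := lintegral_lintegral_swap hH.aemeasurable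
    _ ≤ ∫⁻ _z, a * (b * A1 + (A2 + A3)) ∂(lam n) := by
        refine lintegral_mono_ae ?_
        filter_upwards [lam_ae n] with z hz
        have m1 : Measurable fun q => H1 q z := hH1.comp (by fun_prop : Measurable fun q : Euc n × Euc n => (q, z))
        have m2 : Measurable fun q => H2 q z := hH2.comp (by fun_prop : Measurable fun q : Euc n × Euc n => (q, z))
        have m3 : Measurable fun q => H3 q z := hH3.comp (by fun_prop : Measurable fun q : Euc n × Euc n => (q, z))
        rw [lintegral_const_mul _ (by fun_prop), lintegral_add_left (m1.const_mul _),
          lintegral_add_left m2, lintegral_const_mul _ m1]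
        exact mul_le_mul_right (add_le_add (mul_le_mul_right (I1 z hz) _) (add_le_add (I2 z hz) (I3 z hz))) _
    _ = _ := by rw [lintegral_const, measure_univ, mul_one]

lemma ww_step {n M : ℕ} {p : ℝ} (hp : 1 ≤ p) {u : Euc n → Euc M} (hu : Measurable u)
    (huS : ∀ x, ‖u x‖ = 1) {x0 : Euc n} {R : ℝ} (hR : 0 < R) (c : Euc M)
    (x y : Euc n) (hq : (x, y) ∈ SS x0 R) :
    ‖ww u x0 R c x - ww u x0 R c y‖ₑ ^ p * (‖x - y‖ₑ ^ (2 * n))⁻¹ ≤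
    ∫⁻ z, 2 ^ (p - 1) * (2 ^ (2 * n) * (AA x0 R).indicator (ed p u) (TT x0 R z x, TT x0 R z y) +
        (‖gg x0 R x - gg x0 R y‖ₑ ^ p * (‖x - y‖ₑ ^ (2 * n))⁻¹ * (NN x0 R).indicator (fun a => ‖u a - c‖ₑ ^ p) (TT x0 R z y)
        + ‖gg x0 R y - gg x0 R x‖ₑ ^ p * (‖y - x‖ₑ ^ (2 * n))⁻¹ * (NN x0 R).indicator (fun a => ‖u a - c‖ₑ ^ p) (TT x0 R z x))) ∂(lam n) := by
  rw [ww_diff hu huS]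
  have hm : Measurable fun z => gg x0 R x • (u (TT x0 R z x) - c) - gg x0 R y • (u (TT x0 R z y) - c) := by
    unfold TT; fun_prop
  have hm2 := (hm.enorm.pow_const p)
  refine (mul_le_mul_left (jensen_lam hp _ hm.aestronglyMeasurable) _).trans ?_
  rw [← lintegral_mul_const _ hm2]
  refine lintegral_mono_ae ?_
  filter_upwards [lam_ae n] with z hz
  exact pt_bound hp hR c hz hq

lemma ww_energy {n M : ℕ} {p : ℝ} (hp : 1 ≤ p) {u : Euc n → Euc M} (hu : Measurable u)
    (huS : ∀ x, ‖u x‖ = 1) {C : ℝ≥0∞}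
    {x0 : Euc n} {R : ℝ} (hR : 0 < R)
    (hC : ∀ y, ∫⁻ x, ‖gg x0 R x - gg x0 R y‖ₑ ^ p * (‖x - y‖ₑ ^ (2 * n))⁻¹ ≤ C * wt x0 R y)
    (c : Euc M) :
    ∫⁻ q in SS x0 R, ed p (ww u x0 R c) q ≤
      2 ^ (p - 1) * (2 ^ (2 * n) * (2 ^ n * (2 ^ n * ∫⁻ q in AA x0 R, ed p u q)) +
        (C * 2 ^ (2 * n) * 2 ^ n * Fw p u x0 R c + C * 2 ^ (2 * n) * 2 ^ n * Fw p u x0 R c)) := by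
  have hg := (gg_cont x0 R).measurable
  have hTT : Measurable fun q : Euc n × Euc n => TT x0 R q.1 q.2 := (TT_cont x0 R).measurable
  have hφ : Measurable ((NN x0 R).indicator (fun a => ‖u a - c‖ₑ ^ p)) :=
    (by fun_prop : Measurable fun a => ‖u a - c‖ₑ ^ p).indicator (NN_meas x0 R)
  have hψ : Measurable ((AA x0 R).indicator (ed p u)) := (ed_meas hu).indicator (AA_meas x0 R)
  have hT1 : Measurable fun a : (Euc n × Euc n) × Euc n => TT x0 R a.2 a.1.1 :=
    hTT.comp (by fun_prop : Measurable fun a : (Euc n × Euc n) × Euc n => (a.2, a.1.1))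
  have hT2 : Measurable fun a : (Euc n × Euc n) × Euc n => TT x0 R a.2 a.1.2 :=
    hTT.comp (by fun_prop : Measurable fun a : (Euc n × Euc n) × Euc n => (a.2, a.1.2))
  have k2 : Measurable fun a : (Euc n × Euc n) × Euc n =>
      ‖gg x0 R a.1.1 - gg x0 R a.1.2‖ₑ ^ p * (‖a.1.1 - a.1.2‖ₑ ^ (2 * n))⁻¹ := by fun_prop
  have k3 : Measurable fun a : (Euc n × Euc n) × Euc n =>
      ‖gg x0 R a.1.2 - gg x0 R a.1.1‖ₑ ^ p * (‖a.1.2 - a.1.1‖ₑ ^ (2 * n))⁻¹ := by fun_prop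
  have hH2 := k2.mul (hφ.comp hT2)
  have hH3 := k3.mul (hφ.comp hT1)
  refine three_piece (SS_meas x0 R)
    (fun q z => (AA x0 R).indicator (ed p u) (TT x0 R z q.1, TT x0 R z q.2))
    (fun q z => ‖gg x0 R q.1 - gg x0 R q.2‖ₑ ^ p * (‖q.1 - q.2‖ₑ ^ (2 * n))⁻¹ * (NN x0 R).indicator (fun a => ‖u a - c‖ₑ ^ p) (TT x0 R z q.2))
    (fun q z => ‖gg x0 R q.2 - gg x0 R q.1‖ₑ ^ p * (‖q.2 - q.1‖ₑ ^ (2 * n))⁻¹ * (NN x0 R).indicator (fun a => ‖u a - c‖ₑ ^ p) (TT x0 R z q.1))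
    (hψ.comp (hT1.prodMk hT2)) hH2 hH3 ?_ ?_ ?_ (fun q hq => ww_step hp hu huS hR c q.1 q.2 hq)
  · intro z hz
    have hT : Measurable (TT x0 R z) :=
      hTT.comp (by fun_prop : Measurable fun x : Euc n => (z, x))
    have := lintegral_prod_comp_anti (TT_anti x0 hz) hT hψ
    rwa [lintegral_indicator (AA_meas x0 R)] at this
  · intro z hz
    have m2 := hH2.comp (by fun_prop : Measurable fun q : Euc n × Euc n => (q, z))
    rw [Measure.volume_eq_prod]
    refine (lintegral_prod_symm _ m2.aemeasurable).le.trans ?_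
    exact H2_bound (p := p) hu hR hC c hz
  · intro z hz
    have m3 := hH3.comp (by fun_prop : Measurable fun q : Euc n × Euc n => (q, z))
    rw [Measure.volume_eq_prod]
    refine (lintegral_prod _ m3.aemeasurable).le.trans ?_
    exact H2_bound (p := p) hu hR hC c hz

/-- energy of pairs touching the ball -/
def PE {n M : ℕ} (p : ℝ) (u : Euc n → Euc M) (x0 : Euc n) (R : ℝ) : ℝ≥0∞ := ∫⁻ q in SS x0 R, ed p u q

lemma normalize_lip {M : ℕ} {a b : Euc M} (ha : 1 / 2 ≤ ‖a‖) (hb : 1 / 2 ≤ ‖b‖) :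
    ‖‖a‖⁻¹ • a - ‖b‖⁻¹ • b‖ₑ ≤ 4 * ‖a - b‖ₑ := by
  have ha0 : 0 < ‖a‖ := by linarith
  have hb0 : 0 < ‖b‖ := by linarith
  have e : ‖a‖⁻¹ • a - ‖b‖⁻¹ • b = ‖a‖⁻¹ • ((a - b) + ((‖b‖ - ‖a‖) * ‖b‖⁻¹) • b) := by
    have : ‖a‖⁻¹ * ((‖b‖ - ‖a‖) * ‖b‖⁻¹) = ‖a‖⁻¹ - ‖b‖⁻¹ := by field_simp
    rw [smul_add, smul_smul, this]; module
  have h1 : ‖((‖b‖ - ‖a‖) * ‖b‖⁻¹) • b‖ ≤ ‖a - b‖ := by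
    rw [norm_smul, norm_mul, norm_inv, norm_norm, mul_assoc, inv_mul_cancel₀ hb0.ne', mul_one,
      norm_sub_rev a b]
    exact abs_norm_sub_norm_le b a
  have h2 : ‖‖a‖⁻¹ • a - ‖b‖⁻¹ • b‖ ≤ 4 * ‖a - b‖ := by
    rw [e, norm_smul, norm_inv, norm_norm]
    have h3 : ‖a‖⁻¹ ≤ 2 := by
      rw [inv_le_comm₀ ha0 (by norm_num)]; linarith
    have h4 := norm_add_le (a - b) (((‖b‖ - ‖a‖) * ‖b‖⁻¹) • b)
    calc _ ≤ 2 * (‖a - b‖ + ‖a - b‖) := by gcongr; linarith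
      _ = _ := by ring
  have h4 := ENNReal.ofReal_le_ofReal h2
  rwa [ENNReal.ofReal_mul (by norm_num), ENNReal.ofReal_ofNat, ofReal_norm, ofReal_norm] at h4

lemma PE_split {n M : ℕ} {p : ℝ} {u : Euc n → Euc M} (x0 : Euc n) {R : ℝ} (hR : 0 < R) :
    PE p u x0 R = (∫⁻ q in AA x0 R, ed p u q) + PE p u x0 (R / 4) := by
  have h : SS x0 R = AA x0 R ∪ SS x0 (R / 4) := by
    ext ⟨a, b⟩
    simp only [SS, AA, NN, mem_union, mem_inter_iff, mem_setOf_eq, mem_prod]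
    constructor
    · intro h
      by_cases h2 : ‖a - x0‖ < R / 4 ∨ ‖b - x0‖ < R / 4
      · exact Or.inr h2
      · push Not at h2
        exact Or.inl ⟨h, h2⟩
    · rintro (h | h)
      · exact h.1
      · rcases h with h | h
        · left; linarith
        · right; linarith
  have hd : Disjoint (AA x0 R) (SS x0 (R / 4)) := by
    rw [Set.disjoint_left]
    rintro ⟨a, b⟩ ⟨-, h1, h2⟩ h3
    simp only [NN, SS, mem_setOf_eq] at h1 h2 h3
    rcases h3 with h3 | h3 <;> linarith
  rw [PE, h, lintegral_union (SS_meas _ _) hd, PE]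

lemma decay {n : ℕ} (M : ℕ) (hn : 1 ≤ n) {p : ℝ} (hp1 : 1 ≤ p) (hp : (n : ℝ) < p) :
    ∃ ε : ℝ≥0∞, ε ≠ 0 ∧ ∃ θ : ℝ, 0 < θ ∧ θ < 1 ∧ ∀ (u : Euc n → Euc M), Measurable u → (∀ x, ‖u x‖ = 1) →
      (∫⁻ q, ed p u q ≠ ⊤) → ∀ (x0 : Euc n) (R : ℝ), 0 < R →
      (∀ v : Euc n → Euc M, Measurable v → (∀ x, ‖v x‖ = 1) → (∀ x, R ≤ ‖x - x0‖ → v x = u x) →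
        ∫⁻ q, ed p u q ≤ ∫⁻ q, ed p v q) →
      PE p u x0 R ≤ ε → PE p u x0 (R / 4) ≤ ENNReal.ofReal θ * PE p u x0 R := by
  have hp0 : 0 < p := by linarith
  obtain ⟨CG, hCG, hG⟩ := G_bound hn hp
  obtain ⟨C3, hC3, h3⟩ := choose_c M hn p
  -- constants
  set C4 : ℝ≥0∞ := 16 ^ n * 2 ^ (2 * n) * (om n)⁻¹ * C3 with hC4
  have hC4' : C4 ≠ ⊤ := by have := om_ne_zero n; rw [hC4]; finiteness
  set C5 : ℝ≥0∞ := 4 ^ p * (2 ^ (p - 1) * (2 ^ (2 * n) * (2 ^ n * 2 ^ n) + 2 * (CG * 2 ^ (2 * n) * 2 ^ n * C3))) with hC5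
  have hC5' : C5 ≠ ⊤ := by rw [hC5]; finiteness
  set C : ℝ := C5.toReal + 2 with hC
  have hC2 : 2 ≤ C := by rw [hC]; have := C5.toReal_nonneg; linarith
  refine ⟨ENNReal.ofReal (1 / 2) ^ p / (C1 n 2 + C4 + 1), ?_, 1 - 1 / C, ?_, ?_, ?_⟩
  · rw [ENNReal.div_ne_zero]
    refine ⟨?_, by have := C1_ne_top n 2; finiteness⟩
    have : 0 < ENNReal.ofReal (1 / 2) ^ p := ENNReal.rpow_pos (by simp) (by simp)
    exact this.ne'
  · have : 1 / C ≤ 1 / 2 := one_div_le_one_div_of_le (by norm_num) hC2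
    linarith
  · have : 0 < 1 / C := by positivity
    linarith
  intro u hu huS hfin x0 R hR hmin hsmall
  set m := ∫⁻ q in AA x0 R, ed p u q with hm
  have hsplit := PE_split (p := p) (u := u) x0 hR
  rw [← hm] at hsplit
  have hPfin : PE p u x0 R ≠ ⊤ := ne_top_of_le_ne_top hfin (setLIntegral_le_lintegral _ _)
  have hmP : m ≤ PE p u x0 R := by rw [hsplit]; exact le_self_add
  obtain ⟨z0, hz0⟩ := h3 u hu x0 R hR
  rw [← hm] at hz0
  set c := u z0 with hc
  have hε : (C1 n 2 + C4 + 1) * m ≤ ENNReal.ofReal (1 / 2) ^ p := by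
    have := hmP.trans hsmall
    rw [ENNReal.le_div_iff_mul_le (by simp) (Or.inr (by finiteness))] at this
    rwa [mul_comm]
  have hlow := ww_lower hp1 hu huS hR (huS z0) (x0 := x0)
    (by refine le_trans ?_ hε; rw [hm]; gcongr; rw [add_assoc]; exact le_self_add)
    (by
      refine le_trans ?_ hε
      calc _ ≤ 16 ^ n * 2 ^ (2 * n) * (om n)⁻¹ * (C3 * m) := by gcongr
        _ = C4 * m := by rw [hC4]; ring
        _ ≤ _ := by gcongr; rw [add_comm (C1 n 2), add_assoc]; exact le_self_add)
  have hen := ww_energy hp1 hu huS hR (hG x0 R hR) c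
  have hen2 : ∫⁻ q in SS x0 R, ed p (ww u x0 R c) q ≤
      (2 ^ (p - 1) * (2 ^ (2 * n) * (2 ^ n * 2 ^ n) + 2 * (CG * 2 ^ (2 * n) * 2 ^ n * C3))) * m := by
    refine hen.trans ?_
    rw [← hm]
    calc _ ≤ 2 ^ (p - 1) * (2 ^ (2 * n) * (2 ^ n * (2 ^ n * m)) +
        (CG * 2 ^ (2 * n) * 2 ^ n * (C3 * m) + CG * 2 ^ (2 * n) * 2 ^ n * (C3 * m))) := by gcongr
      _ = _ := by ring
  set w := ww u x0 R c with hw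
  have hwm : Measurable w := ww_meas hu x0 R c
  set v : Euc n → Euc M := fun x => ‖w x‖⁻¹ • w x with hv
  have hvm : Measurable v := by rw [hv]; fun_prop
  have hv1 : ∀ x, ‖v x‖ = 1 := fun x => by
    have : 0 < ‖w x‖ := lt_of_lt_of_le (by norm_num) (hlow x)
    simp only [hv, norm_smul, norm_inv, norm_norm]
    exact inv_mul_cancel₀ this.ne'
  have hvout : ∀ x, R ≤ ‖x - x0‖ → v x = u x := fun x hx => by
    have e : w x = u x := ww_out hR c hx
    simp [hv, e, huS]
  have hE := hmin v hvm hv1 hvout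
  rw [← lintegral_add_compl _ (SS_meas x0 R), ← lintegral_add_compl (ed p v) (SS_meas x0 R)] at hE
  have hcompl : ∫⁻ q in (SS x0 R)ᶜ, ed p v q = ∫⁻ q in (SS x0 R)ᶜ, ed p u q := by
    refine setLIntegral_congr_fun (SS_meas x0 R).compl fun q hq => ?_
    have hq' : ¬ (‖q.1 - x0‖ < R ∨ ‖q.2 - x0‖ < R) := hq
    push Not at hq'
    simp only [ed]
    rw [hvout _ hq'.1, hvout _ hq'.2]
  rw [hcompl, ENNReal.add_le_add_iff_right
    (ne_top_of_le_ne_top hfin (setLIntegral_le_lintegral _ _))] at hE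
  have hfinal : PE p u x0 R ≤ C5 * m := by
    refine hE.trans ?_
    calc _ ≤ ∫⁻ q in SS x0 R, 4 ^ p * ed p w q := by
          refine lintegral_mono fun q => ?_
          simp only [ed]
          calc _ ≤ (4 * ‖w q.1 - w q.2‖ₑ) ^ p * (‖q.1 - q.2‖ₑ ^ (2 * n))⁻¹ := by
                gcongr; exact normalize_lip (hlow _) (hlow _)
            _ = _ := by rw [ENNReal.mul_rpow_of_nonneg _ _ hp0.le]; ring
      _ = 4 ^ p * ∫⁻ q in SS x0 R, ed p w q := lintegral_const_mul _ (ed_meas hwm)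
      _ ≤ 4 ^ p * ((2 ^ (p - 1) * (2 ^ (2 * n) * (2 ^ n * 2 ^ n) + 2 * (CG * 2 ^ (2 * n) * 2 ^ n * C3))) * m) := by gcongr
      _ = _ := by rw [hC5]; ring
  -- conclude
  have hmfin : m ≠ ⊤ := ne_top_of_le_ne_top hPfin hmP
  have hbfin : PE p u x0 (R / 4) ≠ ⊤ := by
    refine ne_top_of_le_ne_top hPfin ?_
    rw [hsplit]; exact le_add_self
  have r1 : (PE p u x0 R).toReal = m.toReal + (PE p u x0 (R / 4)).toReal := by
    rw [hsplit, ENNReal.toReal_add hmfin hbfin]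
  have r2 : (PE p u x0 R).toReal ≤ C5.toReal * m.toReal := by
    rw [← ENNReal.toReal_mul]
    exact ENNReal.toReal_mono (ENNReal.mul_ne_top hC5' hmfin) hfinal
  have r3 : (PE p u x0 (R / 4)).toReal ≤ (1 - 1 / C) * (PE p u x0 R).toReal := by
    have h5 : (PE p u x0 R).toReal ≤ C * m.toReal := by
      rw [hC]; nlinarith [m.toReal_nonneg]
    have h6 : (PE p u x0 R).toReal / C ≤ m.toReal := by
      rw [div_le_iff₀ (by linarith)]; linarith
    have : (1 - 1 / C) * (PE p u x0 R).toReal = (PE p u x0 R).toReal - (PE p u x0 R).toReal / C := by ring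
    linarith
  rw [← ENNReal.ofReal_toReal hbfin, ← ENNReal.ofReal_toReal hPfin, ← ENNReal.ofReal_mul]
  · exact ENNReal.ofReal_le_ofReal r3
  · have : 1 / C ≤ 1 / 2 := one_div_le_one_div_of_le (by norm_num) hC2
    linarith

lemma PE_small {n M : ℕ} {p : ℝ} {u : Euc n → Euc M} (hu : Measurable u)
    (hfin : ∫⁻ q, ed p u q ≠ ⊤) {ε : ℝ≥0∞} (hε : ε ≠ 0) (hn : 1 ≤ n) :
    ∃ ρ : ℝ, 0 < ρ ∧ ∀ (x0 : Euc n) (R : ℝ), 0 < R → R ≤ ρ → PE p u x0 R ≤ ε := by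
  have hem := ed_meas (p := p) hu
  have hsym : ∀ x y, ed p u (x, y) = ed p u (y, x) := fun x y => by
    simp only [ed]
    rw [← enorm_neg (u x - u y), neg_sub, ← enorm_neg (x - y), neg_sub]
  have hfin' := hfin
  rw [Measure.volume_eq_prod, lintegral_prod _ hem.aemeasurable] at hfin'
  obtain ⟨δ, hδ, h⟩ := exists_pos_setLIntegral_lt_of_measure_lt hfin' (ε := ε / 2) (by simpa using hε)
  have hlim : Tendsto (fun r : ℝ => ENNReal.ofReal r ^ n * om n) (𝓝[>] 0) (𝓝 0) := by
    have h1 : Tendsto (fun r : ℝ => ENNReal.ofReal r ^ n * om n) (𝓝 0) (𝓝 (ENNReal.ofReal 0 ^ n * om n)) := by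
      refine ENNReal.Tendsto.mul_const ?_ (Or.inr (om_ne_top n))
      exact (ENNReal.continuous_pow n).tendsto _ |>.comp (ENNReal.continuous_ofReal.tendsto 0)
    rw [ENNReal.ofReal_zero, zero_pow (by omega), zero_mul] at h1
    exact h1.mono_left nhdsWithin_le_nhds
  have hev := hlim.eventually (gt_mem_nhds hδ)
  obtain ⟨ρ, hρ1, hρ⟩ := (hev.and self_mem_nhdsWithin).exists
  refine ⟨ρ, hρ, fun x0 R hR hRρ => ?_⟩
  have hvol : volume (closedBall x0 R) < δ := by
    rw [vol_closedBall x0 hR]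
    refine lt_of_le_of_lt ?_ hρ1
    gcongr
  have h2 := (h _ hvol).le
  have hsub : SS x0 R ⊆ (closedBall x0 R ×ˢ univ) ∪ (univ ×ˢ closedBall x0 R) := by
    rintro ⟨a, b⟩ (h | h)
    · left; refine ⟨?_, mem_univ _⟩; rw [mem_closedBall, dist_eq_norm]; exact le_of_lt h
    · right; refine ⟨mem_univ _, ?_⟩; rw [mem_closedBall, dist_eq_norm]; exact le_of_lt h
  calc PE p u x0 R ≤ ∫⁻ q in (closedBall x0 R ×ˢ univ) ∪ (univ ×ˢ closedBall x0 R), ed p u q := lintegral_mono_set hsub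
    _ ≤ (∫⁻ q in (closedBall x0 R ×ˢ univ), ed p u q) + ∫⁻ q in (univ ×ˢ closedBall x0 R), ed p u q :=
        lintegral_union_le _ _ _
    _ ≤ ε / 2 + ε / 2 := by
        rw [Measure.volume_eq_prod, ← Measure.prod_restrict, ← Measure.prod_restrict,
          lintegral_prod _ hem.aemeasurable, lintegral_prod_symm _ hem.aemeasurable, Measure.restrict_univ]
        refine add_le_add h2 (le_trans (le_of_eq ?_) h2)
        exact lintegral_congr fun x => lintegral_congr fun y => hsym y x
    _ = ε := ENNReal.add_halves ε

lemma root_le {p τ : ℝ} (hp : 0 < p) (hτ : 0 ≤ τ) {a : ℝ≥0∞} {D D' : ℝ≥0∞} (hD : D' ≠ ⊤) (hDD : D ≤ D') (j : ℕ)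
    (h : a ^ p ≤ D * (ENNReal.ofReal τ ^ p) ^ j) : a.toReal ≤ D'.toReal ^ (1 / p) * τ ^ j := by
  have h0 := h.trans (mul_le_mul_left hDD _)
  have h1 : a ≤ D' ^ (1 / p) * ENNReal.ofReal τ ^ j := by
    have h2 := ENNReal.rpow_le_rpow h0 (by positivity : 0 ≤ 1 / p)
    rw [ENNReal.mul_rpow_of_nonneg _ _ (by positivity : 0 ≤ 1 / p), ← ENNReal.rpow_mul, mul_one_div_cancel hp.ne',
      ENNReal.rpow_one, ← ENNReal.rpow_natCast, ← ENNReal.rpow_mul, ← ENNReal.rpow_mul] at h2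
    have : p * j * (1 / p) = j := by field_simp
    rwa [← mul_assoc, this, ENNReal.rpow_natCast] at h2
  have hp' : 0 ≤ 1 / p := by positivity
  have h3 := ENNReal.toReal_mono (by finiteness) h1
  rwa [ENNReal.toReal_mul, ENNReal.toReal_pow, ENNReal.toReal_ofReal hτ, ← ENNReal.toReal_rpow] at h3

lemma VV_norm_le {n M : ℕ} {u : Euc n → Euc M} (huS : ∀ x, ‖u x‖ = 1) (x : Euc n) (r : ℝ) :
    ‖VV u x r‖ ≤ 1 := by
  have := norm_integral_le_of_norm_le_const (μ := lam n) (f := fun z => u (x + r • z)) (C := 1)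
    (Eventually.of_forall fun z => (huS _).le)
  simpa [VV] using this

/-- the uniform constant -/
def CE (n : ℕ) (p : ℝ) (E : ℝ≥0∞) : ℝ := (C1 n 3 * (ENNReal.ofReal (1 / 4) ^ n)⁻¹ * E).toReal ^ (1 / p)

lemma prod_le_PE {n M : ℕ} {p : ℝ} {u : Euc n → Euc M} (x : Euc n) {r R : ℝ} (h : r < R) (B : Set (Euc n)) :
    ∫⁻ q in closedBall x r ×ˢ B, ed p u q ≤ PE p u x R := by
  refine lintegral_mono_set ?_
  rintro ⟨a, b⟩ ⟨ha, -⟩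
  left
  rw [mem_closedBall, dist_eq_norm] at ha
  exact lt_of_le_of_lt ha h

lemma C1_mono (n : ℕ) : C1 n 2 ≤ C1 n 3 := by
  unfold C1; gcongr; norm_num

lemma one_le_inv4 (n : ℕ) : 1 ≤ (ENNReal.ofReal (1 / 4) ^ n)⁻¹ := by
  rw [ENNReal.one_le_inv]
  exact pow_le_one₀ (by simp) (ENNReal.ofReal_le_one.2 (by norm_num))

lemma K4_ne_top (n : ℕ) {E : ℝ≥0∞} (hE : E ≠ ⊤) : C1 n 3 * (ENNReal.ofReal (1 / 4) ^ n)⁻¹ * E ≠ ⊤ := by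
  have := C1_ne_top n 3
  have h4 : ENNReal.ofReal (1 / 4) ^ n ≠ 0 := by
    have : 0 < ENNReal.ofReal (1 / 4) := by simp
    exact pow_ne_zero _ this.ne'
  finiteness

lemma camp_step {n M : ℕ} {p : ℝ} (hp : 1 ≤ p) {u : Euc n → Euc M} (hu : Measurable u)
    (huS : ∀ x, ‖u x‖ = 1) {E : ℝ≥0∞} (hE : E ≠ ⊤) {τ : ℝ} (hτ : 0 ≤ τ) {x : Euc n} {R : ℝ} (hR : 0 < R) (j : ℕ)
    (h : PE p u x R ≤ (ENNReal.ofReal τ ^ p) ^ j * E) :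
    ‖VV u x (R / 4) - VV u x (R / 4 / 4)‖ ≤ CE n p E * τ ^ j ∧ 1 - ‖VV u x (R / 4)‖ ≤ CE n p E * τ ^ j ∧
    ∀ y, ‖x - y‖ ≤ R / 4 → ‖VV u x (R / 4) - VV u y (R / 4)‖ ≤ CE n p E * τ ^ j := by
  have hp0 : 0 < p := by linarith
  have hr : 0 < R / 4 := by positivity
  refine ⟨?_, ?_, ?_⟩
  · have h1 := avg_diff hp hu huS x x (ρ := 2 * (R / 4)) hr (by positivity : 0 < (1 / 4) * (R / 4)) (by simp; linarith)
    rw [scale_const hr (by norm_num) (by norm_num)] at h1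
    have h2 := h1.trans (mul_le_mul_right ((prod_le_PE x (by linarith : R / 4 < R) _).trans h) _)
    rw [← toReal_enorm, show R / 4 / 4 = 1 / 4 * (R / 4) by ring]
    refine root_le hp0 hτ (D := C1 n 2 * (ENNReal.ofReal (1 / 4) ^ n)⁻¹ * E) (K4_ne_top n hE) ?_ j (h2.trans (le_of_eq (by ring)))
    gcongr
    exact C1_mono n
  · have h1 := avg_sphere hp hu huS x hr
    have h2 := h1.trans (mul_le_mul_right ((prod_le_PE x (by linarith : R / 4 < R) _).trans h) _)
    have := root_le hp0 hτ (D := C1 n 2 * E) (K4_ne_top n hE) ?_ j (h2.trans (le_of_eq (by ring)))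
    · rwa [ENNReal.toReal_ofReal (by linarith [VV_norm_le huS x (R / 4)])] at this
    calc _ ≤ C1 n 3 * 1 * E := by rw [mul_one]; gcongr; exact C1_mono n
      _ ≤ _ := by gcongr; exact one_le_inv4 n
  · intro y hy
    have h1 := avg_diff hp hu huS x y (ρ := 3 * (R / 4)) hr (by positivity : 0 < 1 * (R / 4)) (by linarith)
    rw [scale_const hr (by norm_num) (by norm_num)] at h1
    have h2 := h1.trans (mul_le_mul_right ((prod_le_PE x (by linarith : R / 4 < R) _).trans h) _)
    rw [one_mul] at h2
    rw [← toReal_enorm]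
    refine root_le hp0 hτ (D := C1 n 3 * E) (K4_ne_top n hE) ?_ j (h2.trans (le_of_eq (by simp; ring)))
    calc _ ≤ C1 n 3 * 1 * E := by rw [mul_one]
      _ ≤ _ := by gcongr; exact one_le_inv4 n

lemma VV_ae {n M : ℕ} {u : Euc n → Euc M} (hu : Measurable u) (huS : ∀ x, ‖u x‖ = 1) :
    ∀ᵐ x, Tendsto (fun k : ℕ => VV u x ((1 / 4) ^ k)) atTop (𝓝 (u x)) := by
  have hloc : LocallyIntegrable u volume := by
    refine (memLp_top_of_bound hu.aestronglyMeasurable 1 (Eventually.of_forall fun x => (huS x).le)).locallyIntegrable ?_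
    simp
  filter_upwards [(IsUnifLocDoublingMeasure.vitaliFamily (volume : Measure (Euc n)) 1).ae_tendsto_lintegral_enorm_sub_div hloc] with x hx
  have hd : Tendsto (fun k : ℕ => (1 / 4 : ℝ) ^ k) atTop (𝓝[>] 0) := by
    refine tendsto_nhdsWithin_iff.2 ⟨tendsto_pow_atTop_nhds_zero_of_lt_one (by norm_num) (by norm_num), ?_⟩
    exact Eventually.of_forall fun k => by simp
  have h1 := hx.comp (IsUnifLocDoublingMeasure.tendsto_closedBall_filterAt (volume : Measure (Euc n)) (K := 1) (x := x)
    (fun _ : ℕ => x) (fun k : ℕ => (1 / 4 : ℝ) ^ k) hd (Eventually.of_forall fun k => by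
      simp))
  rw [tendsto_iff_edist_tendsto_0]
  refine tendsto_of_tendsto_of_tendsto_of_le_of_le tendsto_const_nhds h1 (fun _ => zero_le) fun k => ?_
  have hk : 0 < (1 / 4 : ℝ) ^ k := by positivity
  have h2 := avg_pt (p := 1) le_rfl hu huS x ((1 / 4) ^ k) (u x)
  simp only [ENNReal.rpow_one] at h2
  rw [lintegral_lam x hk (f := fun y => ‖u y - u x‖ₑ) (by fun_prop)] at h2
  simp only [Function.comp, edist_eq_enorm_sub]
  rw [vol_closedBall x hk, ENNReal.div_eq_inv_mul]
  exact h2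

lemma holder_of_scales {n M : ℕ} {F : Euc n → Euc M} {K : Set (Euc n)} {R C α : ℝ} (hR : 0 < R) (hC : 0 ≤ C) (hα : 0 < α)
    (hF : ∀ x, ‖F x‖ = 1)
    (h : ∀ x ∈ K, ∀ y ∈ K, ∀ j : ℕ, ‖x - y‖ ≤ R * (1 / 4) ^ j → ‖F x - F y‖ ≤ C * ((1 / 4 : ℝ) ^ α) ^ j) :
    ∃ L : ℝ, ∀ x ∈ K, ∀ y ∈ K, ‖F x - F y‖ ≤ L * ‖x - y‖ ^ α := by
  refine ⟨C * (4 / R) ^ α + 2 * (1 / R) ^ α, fun x hx y hy => ?_⟩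
  rcases eq_or_ne x y with rfl | hxy
  · simp; positivity
  have hd : 0 < ‖x - y‖ := norm_pos_iff.2 (sub_ne_zero.2 hxy)
  rw [add_mul, mul_assoc, mul_assoc, ← Real.mul_rpow (by positivity) hd.le, ← Real.mul_rpow (by positivity) hd.le]
  rcases le_or_gt ‖x - y‖ R with h1 | h1
  · obtain ⟨j, hj1, hj2⟩ := exists_nat_pow_near_of_lt_one (x := ‖x - y‖ / R) (y := (1 / 4 : ℝ)) (by positivity)
      ((div_le_one hR).2 h1) (by norm_num) (by norm_num)
    have h2 := h x hx y hy j (by rw [div_le_iff₀ hR] at hj2; linarith)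
    have h3 : ((1 / 4 : ℝ) ^ α) ^ j ≤ (4 / R * ‖x - y‖) ^ α := by
      rw [← Real.rpow_natCast, ← Real.rpow_mul (by norm_num), mul_comm α, Real.rpow_mul (by norm_num), Real.rpow_natCast]
      refine Real.rpow_le_rpow (by positivity) ?_ hα.le
      rw [pow_succ] at hj1
      have : 4 / R * ‖x - y‖ = 4 * (‖x - y‖ / R) := by ring
      linarith
    have h4 : 0 ≤ 2 * (1 / R * ‖x - y‖) ^ α := by positivity
    nlinarith [mul_le_mul_of_nonneg_left h3 hC]
  · have h2 : ‖F x - F y‖ ≤ 2 := by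
      have := norm_sub_le (F x) (F y); rw [hF, hF] at this; linarith
    have h3 : 1 ≤ (1 / R * ‖x - y‖) ^ α := by
      refine Real.one_le_rpow ?_ hα.le
      rw [one_div, ← div_eq_inv_mul, one_le_div hR]; exact h1.le
    have h4 : 0 ≤ C * (4 / R * ‖x - y‖) ^ α := by positivity
    linarith

/-- local Hölder continuity of sphere-valued minimizing `W^{s,n/s}`-harmonic
maps. -/
theorem stmt18 (n M : ℕ) (hn : 1 ≤ n) (hM : 2 ≤ M) (s : ℝ) (hs : 0 < s) (hs1 : s < 1)
    (hn1 : n = 1 → s ≤ 1 / 2)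
    (u : Euc n → Euc M) (hu : Measurable u) (huS : ∀ x, ‖u x‖ = 1)
    (huW : gagliardo n M s ((n : ℝ) / s) Set.univ u < ⊤)
    (Ω : Set (Euc n)) (hΩ : IsOpen Ω)
    (hmin : ∀ v : Euc n → Euc M, Measurable v → (∀ x, ‖v x‖ = 1) →
      (∀ᵐ x ∂(volume.restrict Ωᶜ), v x = u x) →
      energy n M s u ≤ energy n M s v) :
    ∃ α : ℝ, 0 < α ∧ α < 1 ∧
      ∃ ut : Euc n → Euc M, (∀ x, ‖ut x‖ = 1) ∧ (∀ᵐ x, ut x = u x) ∧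
        ∀ K : Set (Euc n), IsCompact K → K ⊆ Ω →
          ∃ L : ℝ, ∀ x ∈ K, ∀ y ∈ K, ‖ut x - ut y‖ ≤ L * ‖x - y‖ ^ α := by
  have hn0 : (1 : ℝ) ≤ n := by exact_mod_cast hn
  have hnp : (n : ℝ) < (n : ℝ) / s := by
    rw [lt_div_iff₀ hs]; nlinarith
  have hfin := gagliardo_fin hn hs hu huW
  have hmin' : ∀ v : Euc n → Euc M, Measurable v → (∀ x, ‖v x‖ = 1) → (∀ x, x ∉ Ω → v x = u x) →
      ∫⁻ q, ed ((n : ℝ) / s) u q ≤ ∫⁻ q, ed ((n : ℝ) / s) v q := by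
    intro v hv hv1 hvu
    rw [← energy_eq hn hs hu, ← energy_eq hn hs hv]
    refine hmin v hv hv1 ?_
    filter_upwards [ae_restrict_mem hΩ.measurableSet.compl] with x hx
    exact hvu x hx
  generalize (n : ℝ) / s = p at hnp hfin hmin'
  have hp : 1 ≤ p := by linarith
  have hp0 : 0 < p := by linarith
  obtain ⟨ε, hε, θ, hθ0, hθ1, hdec⟩ := decay M hn hp hnp
  obtain ⟨ρ, hρ, hsm⟩ := PE_small (p := p) hu hfin hε hn
  -- exponent
  obtain ⟨α, hα0, hα1, hαθ⟩ : ∃ α : ℝ, 0 < α ∧ α < 1 ∧ θ ≤ ((1 / 4 : ℝ) ^ α) ^ p := by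
    have hc : Tendsto (fun α : ℝ => ((1 / 4 : ℝ) ^ α) ^ p) (𝓝 0) (𝓝 1) := by
      have : Continuous fun α : ℝ => ((1 / 4 : ℝ) ^ α) ^ p := by
        refine Continuous.rpow_const ?_ (fun _ => Or.inr hp0.le)
        exact Real.continuous_const_rpow (by norm_num)
      have h := this.tendsto 0
      simpa using h
    have h1 : ∀ᶠ α in 𝓝[>] (0 : ℝ), θ < ((1 / 4 : ℝ) ^ α) ^ p :=
      nhdsWithin_le_nhds (hc.eventually (lt_mem_nhds hθ1))
    have h2 : ∀ᶠ α in 𝓝[>] (0 : ℝ), α < 1 := nhdsWithin_le_nhds (gt_mem_nhds one_pos)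
    obtain ⟨α, ⟨h3, h4⟩, h5⟩ := ((h1.and h2).and self_mem_nhdsWithin).exists
    exact ⟨α, h5, h4, h3.le⟩
  set τ : ℝ := (1 / 4 : ℝ) ^ α with hτ
  have hτ0 : 0 < τ := by positivity
  have hτ1 : τ < 1 := Real.rpow_lt_one (by norm_num) (by norm_num) hα0
  set E := ∫⁻ q, ed p u q with hE
  have hCE : 0 ≤ CE n p E := by unfold CE; positivity
  set C := CE n p E with hCdef
  -- the uniform estimates
  have key : ∀ K : Set (Euc n), IsCompact K → K ⊆ Ω → ∃ k0 : ℕ, ∀ x ∈ K, ∀ j : ℕ,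
      ‖VV u x ((1 / 4) ^ (j + k0)) - VV u x ((1 / 4) ^ (j + 1 + k0))‖ ≤ C * τ ^ j ∧
      1 - ‖VV u x ((1 / 4) ^ (j + k0))‖ ≤ C * τ ^ j ∧
      ∀ y, ‖x - y‖ ≤ (1 / 4) ^ (j + k0) →
        ‖VV u x ((1 / 4) ^ (j + k0)) - VV u y ((1 / 4) ^ (j + k0))‖ ≤ C * τ ^ j := by
    intro K hK hKΩ
    obtain ⟨δ, hδ, hδΩ⟩ := hK.exists_thickening_subset_open hΩ hKΩ
    obtain ⟨m, hm⟩ := exists_pow_lt_of_lt_one (lt_min hδ hρ) (by norm_num : (1 / 4 : ℝ) < 1)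
    have hrm : ∀ j : ℕ, (1 / 4 : ℝ) ^ (j + m) ≤ (1 / 4) ^ m := fun j =>
      pow_le_pow_of_le_one (by norm_num) (by norm_num) (by omega)
    refine ⟨m + 1, fun x hx j => ?_⟩
    have hPE : ∀ j : ℕ, PE p u x ((1 / 4) ^ (j + m)) ≤ (ENNReal.ofReal τ ^ p) ^ j * E := by
      intro j
      induction j with
      | zero => rw [pow_zero, one_mul]; exact setLIntegral_le_lintegral _ _
      | succ j ih =>
        have hd := hdec u hu huS hfin x ((1 / 4) ^ (j + m)) (by positivity) (fun v hv hv1 hvu =>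
          hmin' v hv hv1 fun z hz => hvu z (by
            by_contra hlt
            push Not at hlt
            refine hz (hδΩ ?_)
            rw [mem_thickening_iff]
            refine ⟨x, hx, ?_⟩
            rw [dist_eq_norm]
            exact lt_of_lt_of_le hlt ((hrm j).trans (hm.le.trans (min_le_left _ _)))))
          (hsm _ _ (by positivity) ((hrm j).trans (hm.le.trans (min_le_right _ _))))
        have e : (1 / 4 : ℝ) ^ (j + 1 + m) = (1 / 4) ^ (j + m) / 4 := by ring
        rw [e]
        calc _ ≤ ENNReal.ofReal θ * PE p u x ((1 / 4) ^ (j + m)) := hd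
          _ ≤ ENNReal.ofReal τ ^ p * ((ENNReal.ofReal τ ^ p) ^ j * E) := by
              refine mul_le_mul' ?_ ih
              rw [ENNReal.ofReal_rpow_of_pos hτ0]
              exact ENNReal.ofReal_le_ofReal hαθ
          _ = _ := by ring
    have h := camp_step hp hu huS hfin hτ0.le (by positivity) j (hPE j)
    have e1 : (1 / 4 : ℝ) ^ (j + m) / 4 = (1 / 4) ^ (j + (m + 1)) := by ring
    have e2 : (1 / 4 : ℝ) ^ (j + (m + 1)) / 4 = (1 / 4) ^ (j + 1 + (m + 1)) := by ring
    rwa [e1, e2] at h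
  classical
  let ut : Euc n → Euc M := fun x =>
    if x ∈ Ω then limUnder atTop (fun k : ℕ => VV u x ((1 / 4) ^ k)) else u x
  have hlim : ∀ x ∈ Ω, Tendsto (fun k : ℕ => VV u x ((1 / 4) ^ k)) atTop (𝓝 (ut x)) ∧ ‖ut x‖ = 1 := by
    intro x hx
    obtain ⟨k0, h⟩ := key {x} isCompact_singleton (by simpa using hx)
    have hcs : CauchySeq (fun j : ℕ => VV u x ((1 / 4) ^ (j + k0))) := by
      refine cauchySeq_of_le_geometric τ C hτ1 fun j => ?_
      rw [dist_eq_norm]; exact (h x rfl j).1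
    obtain ⟨a, ha⟩ := cauchySeq_tendsto_of_complete hcs
    have ha' : Tendsto (fun k : ℕ => VV u x ((1 / 4) ^ k)) atTop (𝓝 a) :=
      (tendsto_add_atTop_iff_nat (f := fun k : ℕ => VV u x ((1 / 4) ^ k)) k0).1 ha
    have hua : ut x = a := by
      simp only [ut, if_pos hx]; exact ha'.limUnder_eq
    rw [hua]
    refine ⟨ha', le_antisymm ?_ ?_⟩
    · exact le_of_tendsto ha'.norm (Eventually.of_forall fun k => VV_norm_le huS _ _)
    · have h1 : Tendsto (fun j : ℕ => C * τ ^ j) atTop (𝓝 0) := by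
        simpa using (tendsto_pow_atTop_nhds_zero_of_lt_one hτ0.le hτ1).const_mul C
      have := le_of_tendsto_of_tendsto' (ha.norm.const_sub 1) h1 fun j => (h x rfl j).2.1
      linarith
  have hut1 : ∀ x, ‖ut x‖ = 1 := by
    intro x
    by_cases hx : x ∈ Ω
    · exact (hlim x hx).2
    · simp only [ut, if_neg hx]; exact huS x
  refine ⟨α, hα0, hα1, ut, hut1, ?_, ?_⟩
  · filter_upwards [VV_ae hu huS] with x hx
    by_cases hxΩ : x ∈ Ω
    · exact tendsto_nhds_unique (hlim x hxΩ).1 hx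
    · simp only [ut, if_neg hxΩ]
  · intro K hK hKΩ
    obtain ⟨k0, h⟩ := key K hK hKΩ
    have hdist : ∀ x ∈ K, ∀ j : ℕ, ‖VV u x ((1 / 4) ^ (j + k0)) - ut x‖ ≤ C * τ ^ j / (1 - τ) := by
      intro x hx j
      have := dist_le_of_le_geometric_of_tendsto (f := fun j : ℕ => VV u x ((1 / 4) ^ (j + k0))) τ C hτ1
        (fun j => by rw [dist_eq_norm]; exact (h x hx j).1)
        ((tendsto_add_atTop_iff_nat (f := fun k : ℕ => VV u x ((1 / 4) ^ k)) k0).2 (hlim x (hKΩ hx)).1) j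
      rwa [dist_eq_norm] at this
    have h1τ : 0 < 1 - τ := by linarith
    refine holder_of_scales (R := (1 / 4) ^ k0) (C := C + 2 * (C / (1 - τ))) (by positivity) (by positivity) hα0 hut1 ?_
    intro x hx y hy j hxy
    have a1 := hdist x hx j
    have a2 := hdist y hy j
    have a3 := (h x hx j).2.2 y (by rw [pow_add, mul_comm]; exact hxy)
    set X := VV u x ((1 / 4) ^ (j + k0))
    set Y := VV u y ((1 / 4) ^ (j + k0))
    have e : ut x - ut y = -(X - ut x) + ((X - Y) + (Y - ut y)) := by abel
    have b1 := norm_add_le (-(X - ut x)) ((X - Y) + (Y - ut y))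
    have b2 := norm_add_le (X - Y) (Y - ut y)
    rw [← e, norm_neg] at b1
    have e2 : (C + 2 * (C / (1 - τ))) * τ ^ j = C * τ ^ j + 2 * (C * τ ^ j / (1 - τ)) := by ring
    rw [e2]
    linarith
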